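/- Fix k ≥ 1 and assume the Hardy–Littlewood conjecture uniformly: π_{k+1}(x, {0}∪D_k) = S({0}∪D_k) · x/(log x)^{k+1} · (1+o(1)) uniformly for D_k ⊂ [2, (log x)^{k+1}] with S({0}∪D_k) ≠ 0. Then for every prime p there exists X such that for all x ≥ X, every k-tuple jumping champion D_k* for x has p dividing every element of D_k*. -/

import Mathlib

open Finset

/-- Number of residue classes mod `p` occupied by the elements of `D`. -/
def nu (D : Finset ℕ) (p : ℕ) : ℕ := (D.image (· % p)).card

/-- The Hardy–Littlewood singular series of a finite set `D`. -/
noncomputable def singSeries (D : Finset ℕ) : ℝ :=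
  ∏' p : Nat.Primes, ((1 - 1 / ((p : ℕ) : ℝ)) ^ D.card)⁻¹ * (1 - (nu D (p : ℕ) : ℝ) / ((p : ℕ) : ℝ))

/-- `primePi x D` counts positive integers `m ≤ x` with `m + d` prime for all `d ∈ D`. -/
noncomputable def primePi (x : ℝ) (D : Finset ℕ) : ℕ :=
  {m : ℕ | 0 < m ∧ (m : ℝ) ≤ x ∧ ∀ d ∈ D, Nat.Prime (m + d)}.ncard

/-- `Ncham x D` counts `n` such that `p_{n+k} ≤ x` and the gaps `p_{n+i} - p_n` for
`i = 1, …, k` are exactly the elements of `D` (with `k = D.card`). -/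
noncomputable def Ncham (x : ℝ) (D : Finset ℕ) : ℕ :=
  {n : ℕ | ((Nat.nth Nat.Prime (n + D.card) : ℝ) ≤ x) ∧
    (Finset.range D.card).image
      (fun i => Nat.nth Nat.Prime (n + i + 1) - Nat.nth Nat.Prime n) = D}.ncard

/-- `D` is a `k`-tuple jumping champion for `x`. -/
def IsChampion (k : ℕ) (x : ℝ) (D : Finset ℕ) : Prop :=
  D.card = k ∧ (∀ d ∈ D, 0 < d) ∧
    ∀ D' : Finset ℕ, D'.card = k → (∀ d ∈ D', 0 < d) → Ncham x D' ≤ Ncham x D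

/-- Number of prime factors counted with multiplicity. -/
def bigOmega (n : ℕ) : ℕ := n.primeFactorsList.length

/-- The `n`-th primorial `2·3·5⋯p_n`. -/
noncomputable def primorial' (n : ℕ) : ℕ := ∏ i ∈ Finset.range n, Nat.nth Nat.Prime i

/-- The largest primorial not exceeding `y` (equal to `1` if `y < 1`). -/
noncomputable def largestPrimorial (y : ℝ) : ℕ :=
  primorial' (sSup {n : ℕ | (primorial' n : ℝ) ≤ y})

/-! ### Part 1: elementary estimates for sums over primes -/

lemma jc_log_le_prod (Y : ℕ) :
    Real.log Y ≤ ∏ q ∈ Nat.primesLE Y, (1 - 1 / (q : ℝ))⁻¹ := by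
  let f : ℕ →* ℝ :=
    { toFun := fun n => (n : ℝ)⁻¹
      map_one' := by simp
      map_mul' := by intro a b; push_cast; rw [mul_inv] }
  have hf : ∀ {p : ℕ}, p.Prime → ‖f p‖ < 1 := by
    intro p hp
    have h1 : (1 : ℝ) < p := by exact_mod_cast hp.one_lt
    change ‖(p : ℝ)⁻¹‖ < 1
    rw [Real.norm_of_nonneg (by positivity)]
    exact inv_lt_one_of_one_lt₀ h1
  obtain ⟨-, h⟩ := EulerProduct.summable_and_hasSum_smoothNumbers_prod_primesBelow_geometric hf (Y + 1)
  have e : ∏ q ∈ Nat.primesLE Y, (1 - 1 / (q : ℝ))⁻¹ = ∏ p ∈ (Y + 1).primesBelow, (1 - f p)⁻¹ := by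
    apply Finset.prod_congr rfl
    intro q _
    rw [one_div]
    rfl
  rw [e]
  have hs : HasSum (Set.indicator (Nat.smoothNumbers (Y + 1)) (fun m : ℕ => f m))
      (∏ p ∈ (Y + 1).primesBelow, (1 - f p)⁻¹) := by
    rwa [← hasSum_subtype_iff_indicator]
  have h2 := sum_le_hasSum (Finset.Icc 1 Y) (fun i _ => by
    apply Set.indicator_nonneg
    intro m _
    change 0 ≤ (m : ℝ)⁻¹
    positivity) hs
  refine le_trans ?_ h2
  have h3 : ∑ i ∈ Finset.Icc 1 Y, Set.indicator (Nat.smoothNumbers (Y + 1)) (fun m : ℕ => f m) i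
      = ((harmonic Y : ℚ) : ℝ) := by
    rw [harmonic_eq_sum_Icc]
    push_cast
    apply Finset.sum_congr rfl
    intro i hi
    rw [Finset.mem_Icc] at hi
    rw [Set.indicator_of_mem]
    · rfl
    · rw [Nat.mem_smoothNumbers]
      refine ⟨by omega, fun p hp => ?_⟩
      have := Nat.le_of_dvd (by omega) (Nat.dvd_of_mem_primeFactorsList hp)
      omega
  rw [h3]
  refine le_trans ?_ (log_add_one_le_harmonic Y)
  rcases Nat.eq_zero_or_pos Y with h0 | h0
  · subst h0; simp
  · apply Real.log_le_log (by exact_mod_cast h0)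
    push_cast; linarith

lemma jc_sum_inv_mul (n : ℕ) :
    ∑ q ∈ Finset.Icc 2 n, (1 / ((q : ℝ) * (q - 1))) ≤ 1 := by
  have h : ∀ m : ℕ, ∑ q ∈ Finset.Icc 2 (m + 1), (1 / ((q : ℝ) * (q - 1))) ≤ 1 - 1 / (m + 1) := by
    intro m
    induction m with
    | zero => simp
    | succ m ih =>
      rw [Finset.sum_Icc_succ_top (by omega)]
      have : (1 : ℝ) / (((m + 1 + 1 : ℕ) : ℝ) * (((m + 1 + 1 : ℕ) : ℝ) - 1)) =
        1 / (m + 1) - 1 / (m + 2) := by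
        push_cast
        have h1 : (m : ℝ) + 1 ≠ 0 := by positivity
        have h2 : (m : ℝ) + 2 ≠ 0 := by positivity
        have h3 : (m : ℝ) + 1 + 1 ≠ 0 := by positivity
        have h4 : (m : ℝ) + 1 + 1 - 1 ≠ 0 := by ring_nf; positivity
        field_simp
        ring
      rw [this]
      push_cast
      have : (m : ℝ) + 1 + 1 = m + 2 := by ring
      rw [this]
      linarith
  rcases n with _ | n
  · simp
  · refine (h n).trans ?_
    have : (0 : ℝ) ≤ 1 / (n + 1) := by positivity
    linarith

lemma jc_primeSum_lower (n : ℕ) (hn : 3 ≤ n) :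
    Real.log (Real.log n) - 1 ≤ ∑ q ∈ Nat.primesLE n, 1 / (q : ℝ) := by
  have hn3 : (3 : ℝ) ≤ n := by exact_mod_cast hn
  have hlog : 0 < Real.log n := Real.log_pos (by linarith)
  have h1 := jc_log_le_prod n
  have h2 : ∏ q ∈ Nat.primesLE n, (1 - 1 / (q : ℝ))⁻¹ ≤
      Real.exp (∑ q ∈ Nat.primesLE n, (1 / (q : ℝ) + 1 / ((q : ℝ) * (q - 1)))) := by
    rw [Real.exp_sum]
    apply Finset.prod_le_prod
    · intro q hq
      have hp := (Nat.mem_primesLE.1 hq).2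
      have : (2 : ℝ) ≤ q := by exact_mod_cast hp.two_le
      have : 1 / (q : ℝ) ≤ 1 := by rw [div_le_one (by linarith)]; linarith
      rw [inv_nonneg]; linarith
    · intro q hq
      have hp := (Nat.mem_primesLE.1 hq).2
      have h2 : (2 : ℝ) ≤ q := by exact_mod_cast hp.two_le
      have e1 : (1 - 1 / (q : ℝ))⁻¹ = 1 / ((q : ℝ) - 1) + 1 := by
        have : (q : ℝ) - 1 ≠ 0 := by linarith
        have : (q : ℝ) ≠ 0 := by linarith
        field_simp
        ring
      have e2 : 1 / (q : ℝ) + 1 / ((q : ℝ) * (q - 1)) = 1 / ((q : ℝ) - 1) := by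
        have : (q : ℝ) - 1 ≠ 0 := by linarith
        have : (q : ℝ) ≠ 0 := by linarith
        field_simp
        ring
      rw [e1, e2]
      exact Real.add_one_le_exp _
  have h3 : Real.log (Real.log n) ≤ ∑ q ∈ Nat.primesLE n, (1 / (q : ℝ) + 1 / ((q : ℝ) * (q - 1))) := by
    rw [Real.log_le_iff_le_exp hlog]
    exact h1.trans h2
  rw [Finset.sum_add_distrib] at h3
  have h4 : ∑ q ∈ Nat.primesLE n, 1 / ((q : ℝ) * (q - 1)) ≤ 1 := by
    refine le_trans ?_ (jc_sum_inv_mul n)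
    apply Finset.sum_le_sum_of_subset_of_nonneg
    · intro q hq
      rw [Nat.mem_primesLE] at hq
      rw [Finset.mem_Icc]
      exact ⟨hq.2.two_le, hq.1⟩
    · intro q hq _
      rw [Finset.mem_Icc] at hq
      have h2 : (2 : ℝ) ≤ q := by exact_mod_cast hq.1
      apply div_nonneg zero_le_one
      apply mul_nonneg <;> linarith
  linarith

lemma jc_dyadic (j : ℕ) (hj : 1 ≤ j) :
    ∑ q ∈ Nat.primesLE (2 ^ (j + 1)), 1 / (q : ℝ) ≤
      ∑ q ∈ Nat.primesLE (2 ^ j), 1 / (q : ℝ) + 4 / j := by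
  set A := Nat.primesLE (2 ^ (j + 1))
  set B := Nat.primesLE (2 ^ j)
  have hBA : B ⊆ A := by
    intro q hq
    rw [Nat.mem_primesLE] at hq ⊢
    exact ⟨hq.1.trans (Nat.pow_le_pow_right (by norm_num) (by omega)), hq.2⟩
  rw [← Finset.sum_sdiff hBA, add_comm]
  have hmem : ∀ q ∈ A \ B, 2 ^ j ≤ q := by
    intro q hq
    rw [Finset.mem_sdiff, Nat.mem_primesLE, Nat.mem_primesLE] at hq
    by_contra h
    exact hq.2 ⟨by omega, hq.1.2⟩
  have hc : j * (A \ B).card ≤ 4 * 2 ^ j := by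
    have h1 : (2 ^ j) ^ (A \ B).card ≤ ∏ q ∈ A \ B, q := Finset.pow_card_le_prod _ _ _ hmem
    have h2 : ∏ q ∈ A \ B, q ≤ primorial (2 ^ (j + 1)) := by
      unfold primorial
      apply Finset.prod_le_prod_of_subset_of_one_le'
      · intro q hq
        have hq := (Finset.mem_sdiff.1 hq).1
        rw [Nat.mem_primesLE] at hq
        simp only [Finset.mem_filter, Finset.mem_range]
        exact ⟨by omega, hq.2⟩
      · intro q hq _
        exact (Finset.mem_filter.1 hq).2.one_lt.le
    have h3 := (h1.trans h2).trans (primorial_le_four_pow _)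
    rw [← pow_mul, show (4 : ℕ) = 2 ^ 2 by norm_num, ← pow_mul] at h3
    have h4 := (Nat.pow_le_pow_iff_right (by norm_num : 1 < 2)).1 h3
    calc _ ≤ _ := h4
      _ = 4 * 2 ^ j := by ring
  have h5 : ∑ q ∈ A \ B, 1 / (q : ℝ) ≤ (A \ B).card • (1 / (2 : ℝ) ^ j) := by
    apply Finset.sum_le_card_nsmul
    intro q hq
    have : (2 : ℝ) ^ j ≤ q := by exact_mod_cast hmem q hq
    exact one_div_le_one_div_of_le (by positivity) this
  have h6 : (A \ B).card • (1 / (2 : ℝ) ^ j) ≤ 4 / j := by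
    rw [nsmul_eq_mul, mul_one_div]
    have hj' : (0 : ℝ) < j := by exact_mod_cast hj
    rw [div_le_div_iff₀ (by positivity) hj']
    have : ((j * (A \ B).card : ℕ) : ℝ) ≤ ((4 * 2 ^ j : ℕ) : ℝ) := by exact_mod_cast hc
    push_cast at this
    linarith
  linarith

lemma jc_dyadic_sum (J : ℕ) :
    ∑ q ∈ Nat.primesLE (2 ^ (J + 1)), 1 / (q : ℝ) ≤ 1 + 4 * ((harmonic J : ℚ) : ℝ) := by
  induction J with
  | zero =>
    have : Nat.primesLE (2 ^ (0 + 1)) ⊆ {2} := by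
      intro q hq
      rw [Nat.mem_primesLE] at hq
      have := hq.2.two_le
      rw [Finset.mem_singleton]; omega
    refine (Finset.sum_le_sum_of_subset_of_nonneg this (fun i _ _ => by positivity)).trans ?_
    norm_num
  | succ J ih =>
    have := jc_dyadic (J + 1) (by omega)
    rw [harmonic_succ]
    push_cast at this ⊢
    have e : (4 : ℝ) / (J + 1) = 4 * (J + 1 : ℝ)⁻¹ := by ring
    rw [e] at this
    linarith

lemma jc_primeSum_upper (n : ℕ) (hn : 3 ≤ n) :
    ∑ q ∈ Nat.primesLE n, 1 / (q : ℝ) ≤ 12 + 4 * Real.log (Real.log n) := by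
  have hn3 : (3 : ℝ) ≤ n := by exact_mod_cast hn
  have hlog1 : 1 ≤ Real.log n := by
    rw [Real.le_log_iff_exp_le (by linarith)]
    have := Real.exp_one_lt_d9; linarith
  set J := Nat.log 2 n with hJ
  have hJ1 : 1 ≤ J := by
    rw [hJ]; exact Nat.log_pos (by norm_num) (by omega)
  have hlt : n < 2 ^ (J + 1) := Nat.lt_pow_succ_log_self (by norm_num) n
  have hle : 2 ^ J ≤ n := Nat.pow_log_le_self 2 (by omega)
  have h1 : ∑ q ∈ Nat.primesLE n, 1 / (q : ℝ) ≤ ∑ q ∈ Nat.primesLE (2 ^ (J + 1)), 1 / (q : ℝ) := by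
    apply Finset.sum_le_sum_of_subset_of_nonneg
    · intro q hq
      rw [Nat.mem_primesLE] at hq ⊢
      exact ⟨by omega, hq.2⟩
    · intros; positivity
  have h2 := jc_dyadic_sum J
  have h3 := harmonic_le_one_add_log J
  have h4 : (J : ℝ) ≤ 2 * Real.log n := by
    have : Real.log ((2 : ℝ) ^ J) ≤ Real.log n := by
      apply Real.log_le_log (by positivity)
      exact_mod_cast hle
    rw [Real.log_pow] at this
    have h2 := Real.log_two_gt_d9
    have hJ0 : (0 : ℝ) ≤ J := by positivity
    nlinarith
  have h5 : Real.log J ≤ Real.log 2 + Real.log (Real.log n) := by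
    rw [← Real.log_mul (by norm_num) (by linarith)]
    apply Real.log_le_log (by exact_mod_cast hJ1) h4
  have := Real.log_two_lt_d9
  linarith

/-! ### Part 2: Brun's pure sieve -/

lemma jc_cnt1 (T : Finset ℕ) (hT : ∀ q ∈ T, q.Prime) (a : ∀ q ∈ T, ℕ) (N : ℕ) :
    |(((Finset.range N).filter (fun m => ∀ q (hq : q ∈ T), q ∣ m + a q hq)).card : ℝ)
      - N / ((∏ q ∈ T, q : ℕ) : ℝ)| ≤ 1 := by
  have hcop : ((Finset.univ : Finset T) : Set T).Pairwise
      (Function.onFun Nat.Coprime (fun q : T => (q : ℕ))) := by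
    intro q _ r _ hqr
    exact (Nat.coprime_primes (hT q q.2) (hT r r.2)).2 (fun h => hqr (Subtype.ext h))
  obtain ⟨v, hv⟩ := Nat.chineseRemainderOfFinset (ι := T) (fun q => (q.1 - 1) * a q.1 q.2)
    (fun q => q.1) Finset.univ (fun q _ => (hT q q.2).ne_zero) hcop
  have hv' : ∀ q (hq : q ∈ T), q ∣ v + a q hq := by
    intro q hq
    have h1 := hv ⟨q, hq⟩ (Finset.mem_univ _)
    have h2 : v + a q hq ≡ (q - 1) * a q hq + a q hq [MOD q] := Nat.ModEq.add_right _ h1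
    have h3 : (q - 1) * a q hq + a q hq = q * a q hq := by
      have : 1 ≤ q := (hT q hq).one_lt.le
      obtain ⟨r, rfl⟩ := Nat.exists_eq_add_of_le this
      simp; ring
    rw [h3] at h2
    exact (Nat.modEq_zero_iff_dvd).1 (h2.trans ((Nat.modEq_zero_iff_dvd).2 (dvd_mul_right _ _)))
  set Q := ∏ q ∈ T, q with hQ
  have hQpos : 0 < Q := Finset.prod_pos (fun q hq => (hT q hq).pos)
  have hiff : ∀ m, (∀ q (hq : q ∈ T), q ∣ m + a q hq) ↔ m ≡ v [MOD Q] := by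
    intro m
    constructor
    · intro h
      rw [Nat.modEq_iff_dvd, hQ]
      push_cast
      apply Finset.prod_dvd_of_coprime
      · intro q hq r hr hqr
        have := (Nat.coprime_primes (hT q hq) (hT r hr)).2 hqr
        exact Nat.isCoprime_iff_coprime.2 this
      · intro q hq
        have h1 : (q : ℤ) ∣ ((m + a q hq : ℕ) : ℤ) := by exact_mod_cast h q hq
        have h2 : (q : ℤ) ∣ ((v + a q hq : ℕ) : ℤ) := by exact_mod_cast hv' q hq
        have := dvd_sub h2 h1
        push_cast at this
        simpa using this
    · intro h q hq
      have h1 : m ≡ v [MOD q] := h.of_dvd (Finset.dvd_prod_of_mem _ hq)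
      have h2 := (Nat.ModEq.add_right (a q hq) h1)
      exact (Nat.modEq_zero_iff_dvd).1 (h2.trans ((Nat.modEq_zero_iff_dvd).2 (hv' q hq)))
  have hcard : ((Finset.range N).filter (fun m => ∀ q (hq : q ∈ T), q ∣ m + a q hq)).card
      = N / Q + if v % Q < N % Q then 1 else 0 := by
    rw [← Nat.count_modEq_card N hQpos v, Nat.count_eq_card_filter_range]
    congr 1
    apply Finset.filter_congr
    intro m _
    exact hiff m
  rw [hcard]
  have hQr : (0 : ℝ) < Q := by exact_mod_cast hQpos
  have h1 : ((N / Q : ℕ) : ℝ) ≤ N / Q := Nat.cast_div_le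
  have h2 : (N : ℝ) / Q ≤ ((N / Q : ℕ) : ℝ) + 1 := by
    rw [div_le_iff₀ hQr]
    have := Nat.lt_div_mul_add (a := N) hQpos
    have h3 : (N : ℝ) < ((N / Q * Q + Q : ℕ) : ℝ) := by exact_mod_cast this
    push_cast at h3
    linarith
  rw [abs_le]
  split_ifs <;> push_cast <;> constructor <;> linarith

lemma jc_cnt (E T : Finset ℕ) (hT : ∀ q ∈ T, q.Prime)
    (hinj : ∀ q ∈ T, Set.InjOn (fun h => h % q) (E : Set ℕ)) (N : ℕ) :
    |(((Finset.range N).filter (fun m => ∀ q ∈ T, ∃ h ∈ E, q ∣ m + h)).card : ℝ)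
      - (E.card : ℝ) ^ T.card * (N / ((∏ q ∈ T, q : ℕ) : ℝ))| ≤ (E.card : ℝ) ^ T.card := by
  classical
  have hU : (Finset.range N).filter (fun m => ∀ q ∈ T, ∃ h ∈ E, q ∣ m + h) =
      (Finset.pi T (fun _ => E)).biUnion (fun a =>
        (Finset.range N).filter (fun m => ∀ q (hq : q ∈ T), q ∣ m + a q hq)) := by
    ext m
    simp only [Finset.mem_filter, Finset.mem_biUnion, Finset.mem_pi]
    constructor
    · rintro ⟨hm, h⟩
      choose! c hc using h
      exact ⟨fun q _ => c q, fun q hq => (hc q hq).1, hm, fun q hq => (hc q hq).2⟩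
    · rintro ⟨a, ha, hm, h⟩
      exact ⟨hm, fun q hq => ⟨a q hq, ha q hq, h q hq⟩⟩
  have hcard : (((Finset.range N).filter (fun m => ∀ q ∈ T, ∃ h ∈ E, q ∣ m + h)).card : ℝ) =
      ∑ a ∈ Finset.pi T (fun _ => E),
        (((Finset.range N).filter (fun m => ∀ q (hq : q ∈ T), q ∣ m + a q hq)).card : ℝ) := by
    rw [hU, Finset.card_biUnion]
    · push_cast; rfl
    · intro a ha b hb hab
      rw [Function.onFun, Finset.disjoint_left]
      intro m hm1 hm2
      rw [Finset.mem_filter] at hm1 hm2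
      apply hab
      funext q hq
      have ha' := Finset.mem_pi.1 ha q hq
      have hb' := Finset.mem_pi.1 hb q hq
      apply hinj q hq ha' hb'
      have h1 := (Nat.modEq_zero_iff_dvd).2 (hm1.2 q hq)
      have h2 := (Nat.modEq_zero_iff_dvd).2 (hm2.2 q hq)
      exact Nat.ModEq.add_left_cancel' m (h1.trans h2.symm)
  have hpi : (Finset.pi T (fun _ => E)).card = E.card ^ T.card := by
    rw [Finset.card_pi]; simp
  have e : (E.card : ℝ) ^ T.card * (N / ((∏ q ∈ T, q : ℕ) : ℝ)) =
      ∑ a ∈ Finset.pi T (fun _ => E), (N / ((∏ q ∈ T, q : ℕ) : ℝ)) := by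
    rw [Finset.sum_const, hpi, nsmul_eq_mul]; push_cast; rfl
  rw [hcard, e, ← Finset.sum_sub_distrib]
  refine (Finset.abs_sum_le_sum_abs _ _).trans ?_
  refine (Finset.sum_le_sum (fun a _ => jc_cnt1 T hT a N)).trans ?_
  rw [Finset.sum_const, hpi]
  simp

/-- Truncated sign. -/
noncomputable def jcSign (R j : ℕ) : ℝ := if j ≤ R then (-1) ^ j else 0

lemma jc_bonf (B : Finset ℕ) (R : ℕ) (hR : Even R) :
    (if B = ∅ then (1 : ℝ) else 0) ≤ ∑ T ∈ B.powerset, jcSign R T.card := by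
  rw [Finset.sum_powerset_apply_card]
  have h1 : ∑ m ∈ Finset.range (B.card + 1), B.card.choose m • jcSign R m =
      ∑ m ∈ Finset.range (R + 1), (-1 : ℝ) ^ m * (B.card.choose m : ℝ) := by
    have a1 : ∑ m ∈ Finset.range (B.card + 1), B.card.choose m • jcSign R m =
        ∑ m ∈ Finset.range (B.card + R + 1), B.card.choose m • jcSign R m := by
      apply Finset.sum_subset
      · intro m; simp only [Finset.mem_range]; omega
      · intro m _ hm
        rw [Finset.mem_range] at hm
        rw [Nat.choose_eq_zero_of_lt (by omega)]; simp
    have a2 : ∑ m ∈ Finset.range (R + 1), (-1 : ℝ) ^ m * (B.card.choose m : ℝ) =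
        ∑ m ∈ Finset.range (R + 1), B.card.choose m • jcSign R m := by
      apply Finset.sum_congr rfl
      intro m hm
      rw [Finset.mem_range] at hm
      rw [jcSign, if_pos (by omega), nsmul_eq_mul, mul_comm]
    rw [a1, a2]
    symm
    apply Finset.sum_subset
    · intro m; simp only [Finset.mem_range]; omega
    · intro m _ hm
      rw [Finset.mem_range] at hm
      rw [jcSign, if_neg (by omega)]; simp
  rw [h1]
  split_ifs with hB
  · subst hB
    rw [Finset.sum_range_succ']
    simp
  · obtain ⟨n, hn⟩ : ∃ n, B.card = n + 1 :=
      Nat.exists_eq_succ_of_ne_zero (by rwa [Ne, Finset.card_eq_zero])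
    rw [hn]
    have := Int.alternating_sum_range_choose_eq_choose (n := n) (m := R)
    have h2 : ∑ m ∈ Finset.range (R + 1), (-1 : ℝ) ^ m * ((n + 1).choose m : ℝ) =
        (-1) ^ R * (n.choose R : ℝ) := by exact_mod_cast this
    rw [h2, hR.neg_one_pow]
    positivity

lemma jc_brun (E P : Finset ℕ) (N R Z : ℕ) (hP : ∀ q ∈ P, q.Prime)
    (hinj : ∀ q ∈ P, Set.InjOn (fun h => h % q) (E : Set ℕ)) (hR : Even R)
    (hZ : P.card ≤ Z) (hZ1 : 1 ≤ Z) (hκ : ∀ q ∈ P, E.card ≤ q) :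
    (((Finset.range N).filter (fun m => ∀ q ∈ P, ∀ h ∈ E, ¬ q ∣ m + h)).card : ℝ) ≤
      N * (Real.exp (-(E.card * ∑ q ∈ P, 1 / (q : ℝ))) +
        Real.exp (-R + Real.exp 1 * E.card * ∑ q ∈ P, 1 / (q : ℝ))) +
        (Z : ℝ) ^ R * Real.exp E.card := by
  classical
  set κ : ℝ := (E.card : ℝ) with hκdef
  have hκ0 : 0 ≤ κ := by positivity
  have hZr : (1 : ℝ) ≤ Z := by exact_mod_cast hZ1
  let B : ℕ → Finset ℕ := fun m => P.filter (fun q => ∃ h ∈ E, q ∣ m + h)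
  let C : Finset ℕ → ℝ := fun T =>
    (((Finset.range N).filter (fun m => ∀ q ∈ T, ∃ h ∈ E, q ∣ m + h)).card : ℝ)
  have s1 : (((Finset.range N).filter (fun m => ∀ q ∈ P, ∀ h ∈ E, ¬ q ∣ m + h)).card : ℝ) =
      ∑ m ∈ Finset.range N, (if B m = ∅ then (1 : ℝ) else 0) := by
    rw [Finset.card_filter]
    push_cast
    apply Finset.sum_congr rfl
    intro m _
    congr 1
    apply propext
    simp only [B, Finset.filter_eq_empty_iff]
    push Not
    rfl
  have s2 : ∑ m ∈ Finset.range N, (if B m = ∅ then (1 : ℝ) else 0) ≤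
      ∑ T ∈ P.powerset, jcSign R T.card * C T := by
    calc _ ≤ ∑ m ∈ Finset.range N, ∑ T ∈ (B m).powerset, jcSign R T.card :=
          Finset.sum_le_sum (fun m _ => jc_bonf (B m) R hR)
      _ = ∑ m ∈ Finset.range N, ∑ T ∈ P.powerset,
            (if ∀ q ∈ T, ∃ h ∈ E, q ∣ m + h then jcSign R T.card else 0) := by
          apply Finset.sum_congr rfl
          intro m _
          rw [← Finset.sum_filter]
          apply Finset.sum_congr _ (fun _ _ => rfl)
          ext T
          simp only [B, Finset.mem_powerset, Finset.mem_filter, Finset.subset_iff]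
          constructor
          · intro h; exact ⟨fun q hq => (h hq).1, fun q hq => (h hq).2⟩
          · rintro ⟨h1, h2⟩ q hq; exact ⟨h1 hq, h2 q hq⟩
      _ = _ := by
          rw [Finset.sum_comm]
          apply Finset.sum_congr rfl
          intro T _
          rw [← Finset.sum_filter, Finset.sum_const, nsmul_eq_mul, mul_comm]
  have s3 : ∀ T ∈ P.powerset, jcSign R T.card * C T ≤
      N * ∏ q ∈ T, (-(κ / (q : ℝ))) + N * Real.exp (-R) * ∏ q ∈ T, (Real.exp 1 * (κ / (q : ℝ))) +
        (Z : ℝ) ^ R * ∏ q ∈ T, (κ / Z) := by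
    intro T hT
    rw [Finset.mem_powerset] at hT
    have hc := jc_cnt E T (fun q hq => hP q (hT hq)) (fun q hq => hinj q (hT hq)) N
    change |C T - _| ≤ _ at hc
    rw [← hκdef] at hc
    set t := T.card with ht
    have hQ : ∏ q ∈ T, (κ / (q : ℝ)) = κ ^ t / ((∏ q ∈ T, q : ℕ) : ℝ) := by
      rw [Finset.prod_div_distrib, Finset.prod_const]; push_cast; rfl
    set W := ∏ q ∈ T, (κ / (q : ℝ)) with hW
    have hW0 : 0 ≤ W := Finset.prod_nonneg (fun q _ => by positivity)
    have e1 : ∏ q ∈ T, (-(κ / (q : ℝ))) = (-1) ^ t * W := by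
      rw [Finset.prod_neg]
    have e2 : ∏ q ∈ T, (Real.exp 1 * (κ / (q : ℝ))) = Real.exp 1 ^ t * W := by
      rw [Finset.prod_mul_distrib, Finset.prod_const]
    have e3 : ∏ q ∈ T, (κ / (Z : ℝ)) = (κ / Z) ^ t := by rw [Finset.prod_const]
    have e4 : κ ^ t * (N / ((∏ q ∈ T, q : ℕ) : ℝ)) = N * W := by rw [hQ]; ring
    rw [e4, abs_le] at hc
    rw [e1, e2, e3]
    have hN0 : (0 : ℝ) ≤ N := by positivity
    have hNW : 0 ≤ N * W := by positivity
    unfold jcSign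
    split_ifs with htR
    · have h1 : κ ^ t ≤ (Z : ℝ) ^ R * (κ / Z) ^ t := by
        rw [div_pow, mul_div_assoc', le_div_iff₀ (by positivity), mul_comm]
        exact mul_le_mul_of_nonneg_right (pow_le_pow_right₀ hZr htR) (by positivity)
      have h2 : 0 ≤ N * Real.exp (-R) * (Real.exp 1 ^ t * W) := by positivity
      rcases neg_one_pow_eq_or ℝ t with h | h <;> rw [h] <;> linarith [hc.1, hc.2]
    · have h1 : N * W ≤ N * Real.exp (-R) * (Real.exp 1 ^ t * W) := by
        have : 1 ≤ Real.exp (-R) * Real.exp 1 ^ t := by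
          rw [← Real.exp_nat_mul, ← Real.exp_add]
          apply Real.one_le_exp
          have : (R : ℝ) ≤ t := by exact_mod_cast (by omega : R ≤ t)
          linarith
        nlinarith
      have h2 : 0 ≤ (Z : ℝ) ^ R * (κ / Z) ^ t := by positivity
      rcases neg_one_pow_eq_or ℝ t with h | h <;> rw [h] <;> linarith
  rw [s1]
  refine (s2.trans (Finset.sum_le_sum s3)).trans ?_
  rw [Finset.sum_add_distrib, Finset.sum_add_distrib, ← Finset.mul_sum, ← Finset.mul_sum,
    ← Finset.mul_sum, ← Finset.prod_one_add, ← Finset.prod_one_add, ← Finset.prod_one_add]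
  have m1 : ∏ q ∈ P, (1 + -(κ / (q : ℝ))) ≤ Real.exp (-(κ * ∑ q ∈ P, 1 / (q : ℝ))) := by
    rw [Finset.mul_sum, ← Finset.sum_neg_distrib, Real.exp_sum]
    apply Finset.prod_le_prod
    · intro q hq
      have hq0 : (0 : ℝ) < q := by exact_mod_cast (hP q hq).pos
      have : κ / q ≤ 1 := by
        rw [div_le_one hq0, hκdef]; exact_mod_cast hκ q hq
      linarith
    · intro q _
      have := Real.add_one_le_exp (-(κ / (q : ℝ)))
      rw [mul_one_div]; linarith
  have m2 : ∏ q ∈ P, (1 + Real.exp 1 * (κ / (q : ℝ))) ≤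
      Real.exp (Real.exp 1 * κ * ∑ q ∈ P, 1 / (q : ℝ)) := by
    rw [Finset.mul_sum, Real.exp_sum]
    apply Finset.prod_le_prod
    · intro q _; positivity
    · intro q _
      have := Real.add_one_le_exp (Real.exp 1 * (κ / (q : ℝ)))
      rw [mul_one_div, mul_div_assoc]; linarith
  have m3 : ∏ q ∈ P, (1 + κ / (Z : ℝ)) ≤ Real.exp κ := by
    rw [Finset.prod_const]
    have h1 : 1 + κ / (Z : ℝ) ≤ Real.exp (κ / Z) := by
      have := Real.add_one_le_exp (κ / (Z : ℝ)); linarith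
    refine (pow_le_pow_left₀ (by positivity) h1 _).trans ?_
    rw [← Real.exp_nat_mul]
    apply Real.exp_le_exp.2
    have : (P.card : ℝ) ≤ Z := by exact_mod_cast hZ
    rw [mul_div_assoc', div_le_iff₀ (by linarith), mul_comm]
    exact mul_le_mul_of_nonneg_left this hκ0
  have hN0 : (0 : ℝ) ≤ N := by positivity
  rw [Real.exp_add]
  have f1 := mul_le_mul_of_nonneg_left m1 hN0
  have f2 := mul_le_mul_of_nonneg_left m2 (by positivity : 0 ≤ N * Real.exp (-R))
  have f3 := mul_le_mul_of_nonneg_left m3 (by positivity : 0 ≤ (Z : ℝ) ^ R)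
  nlinarith

/-! ### Part 3: the sieve bound for prime tuples -/

lemma jc_eventually_params (κ : ℝ) (hκ : 1 ≤ κ) : ∀ᶠ l : ℝ in Filter.atTop,
    24 ≤ l ∧ κ ≤ Real.exp l ∧ 88 * κ * l ≤ Real.exp l ∧
    κ * (Real.log (88 * κ) + 5 * Real.log l + 13) ≤ l / 8 ∧
    κ + 2 + κ * l ≤ Real.exp l / 2 := by
  have hlin : ∀ c : ℝ, 0 < c → ∀ᶠ l : ℝ in Filter.atTop, l ≤ c * Real.exp l := by
    intro c hc
    have h := (Real.isLittleO_pow_exp_atTop (n := 1)).def hc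
    filter_upwards [h, Filter.eventually_ge_atTop 0] with l hl hl0
    simpa [abs_of_nonneg hl0, abs_of_pos (Real.exp_pos l)] using hl
  have hlog : ∀ c : ℝ, 0 < c → ∀ᶠ l : ℝ in Filter.atTop, Real.log l ≤ c * l := by
    intro c hc
    have h := Real.isLittleO_log_id_atTop.def hc
    filter_upwards [h, Filter.eventually_ge_atTop 1] with l hl hl0
    rw [Real.norm_of_nonneg (Real.log_nonneg hl0)] at hl
    simpa [abs_of_nonneg (by linarith : (0:ℝ) ≤ l)] using hl
  filter_upwards [Filter.eventually_ge_atTop 24, Filter.eventually_ge_atTop κ,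
    Filter.eventually_ge_atTop (16 * κ * (Real.log (88 * κ) + 13)),
    hlin (1 / (88 * κ)) (by positivity), hlog (1 / (80 * κ)) (by positivity),
    hlin (1 / (8 * κ)) (by positivity)] with l h1 h2 h3 h4 h5 h6
  have hκ0 : 0 < κ := by linarith
  have hle : l ≤ Real.exp l := by linarith [Real.add_one_le_exp l]
  refine ⟨h1, by linarith, ?_, ?_, ?_⟩
  · rw [one_div_mul_eq_div, le_div_iff₀ (by positivity)] at h4; linarith
  · rw [one_div_mul_eq_div, le_div_iff₀ (by positivity)] at h5; nlinarith
  · rw [one_div_mul_eq_div, le_div_iff₀ (by positivity)] at h6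
    nlinarith

set_option maxHeartbeats 1600000 in
lemma jc_sieve_aux (κ : ℕ) (hκ : 1 ≤ κ) (x : ℝ) (hx : 1 < x) (l : ℝ)
    (hl : l = Real.log (Real.log x)) (c1 : 24 ≤ l) (c2 : (κ : ℝ) ≤ Real.exp l)
    (c3 : 88 * κ * l ≤ Real.exp l)
    (c4 : κ * (Real.log (88 * κ) + 5 * Real.log l + 13) ≤ l / 8)
    (c5 : κ + 2 + κ * l ≤ Real.exp l / 2)
    (E : Finset ℕ) (hE : E.card = κ) (hEL : ∀ h ∈ E, (h : ℝ) ≤ Real.log x) :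
    (primePi x E : ℝ) ≤ x * Real.exp (-((κ : ℝ) - 1 / 4) * l) := by
  set L := Real.log x with hL
  have hL0 : 0 < L := Real.log_pos hx
  have hLl : Real.exp l = L := by rw [hl, Real.exp_log hL0]
  rw [hLl] at c2 c3 c5
  have hκ1 : (1 : ℝ) ≤ κ := by exact_mod_cast hκ
  have hxL : Real.exp L = x := Real.exp_log (by linarith)
  have hL24 : 24 ≤ L := by rw [← hLl]; linarith [Real.add_one_le_exp l]
  set u := L / (44 * κ * l) with hu
  have hu2 : 2 ≤ u := by
    rw [hu, le_div_iff₀ (by positivity)]; linarith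
  have huL : u * (22 * κ * l) = L / 2 := by
    rw [hu]; field_simp; norm_num
  set z := ⌊Real.exp u⌋₊ with hz
  have hzle : (z : ℝ) ≤ Real.exp u := Nat.floor_le (Real.exp_pos u).le
  have hzgt : Real.exp u < z + 1 := Nat.lt_floor_add_one _
  have hexpu2 : 2 ≤ Real.exp (u / 2) := by linarith [Real.add_one_le_exp (u / 2)]
  have hexpu : Real.exp u = Real.exp (u / 2) * Real.exp (u / 2) := by
    rw [← Real.exp_add]; ring_nf
  have hzge : Real.exp (u / 2) ≤ z := by
    have := mul_le_mul_of_nonneg_left hexpu2 (Real.exp_pos (u / 2)).le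
    linarith
  have he2 : (3 : ℝ) ≤ Real.exp 2 := by linarith [Real.add_one_le_exp (2 : ℝ)]
  have hkl : 1 ≤ κ * l := one_le_mul_of_one_le_of_one_le hκ1 (by linarith)
  have hk0 : (0 : ℝ) ≤ κ := by linarith
  have hz3 : 3 ≤ z := by
    rw [hz]; apply Nat.le_floor
    have := Real.exp_le_exp.2 hu2
    push_cast; linarith
  have hz3r : (3 : ℝ) ≤ z := by exact_mod_cast hz3
  have hlogz : u / 2 ≤ Real.log z := by
    rw [Real.le_log_iff_exp_le (by linarith)]; exact hzge
  have hlogz' : Real.log z ≤ u := by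
    rw [Real.log_le_iff_le_exp (by linarith)]; exact hzle
  have huleL : u ≤ L / 2 := by
    rw [← huL]
    exact le_mul_of_one_le_right (by linarith) (by linarith)
  set w := ⌊L⌋₊ with hw
  have hw3 : 3 ≤ w := by rw [hw]; apply Nat.le_floor; push_cast; linarith
  have hw3r : (3 : ℝ) ≤ w := by exact_mod_cast hw3
  set P := Nat.primesLE z \ Nat.primesLE w with hP
  have hPmem : ∀ q ∈ P, q.Prime ∧ q ≤ z ∧ L < q := by
    intro q hq
    rw [hP, Finset.mem_sdiff, Nat.mem_primesLE, Nat.mem_primesLE] at hq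
    refine ⟨hq.1.2, hq.1.1, ?_⟩
    apply Nat.lt_of_floor_lt
    by_contra hcon
    exact hq.2 ⟨by omega, hq.1.2⟩
  set B := ∑ q ∈ P, 1 / (q : ℝ) with hB
  have hBup : B ≤ 12 + 4 * l := by
    have h1 : B ≤ ∑ q ∈ Nat.primesLE z, 1 / (q : ℝ) :=
      Finset.sum_le_sum_of_subset_of_nonneg Finset.sdiff_subset (fun _ _ _ => by positivity)
    have h2 := jc_primeSum_upper z hz3
    have h3 : Real.log (Real.log z) ≤ l := by
      rw [hl]; apply Real.log_le_log <;> linarith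
    linarith
  have hBlow : l - Real.log (88 * κ) - 5 * Real.log l - 13 ≤ B := by
    have h1 : ∑ q ∈ Nat.primesLE z, 1 / (q : ℝ) ≤ B + ∑ q ∈ Nat.primesLE w, 1 / (q : ℝ) := by
      rw [hB, ← Finset.sum_union Finset.sdiff_disjoint]
      apply Finset.sum_le_sum_of_subset_of_nonneg
      · intro q hq
        rw [Finset.mem_union, Finset.mem_sdiff]
        tauto
      · intros; positivity
    have h2 := jc_primeSum_lower z hz3
    have h3 := jc_primeSum_upper w hw3
    have h4 : Real.log (Real.log w) ≤ Real.log l := by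
      apply Real.log_le_log (Real.log_pos (by linarith))
      rw [hl]
      apply Real.log_le_log (by linarith)
      exact Nat.floor_le hL0.le
    have h5 : l - Real.log (88 * κ) - Real.log l ≤ Real.log (Real.log z) := by
      have : Real.log (u / 2) = l - Real.log (88 * κ) - Real.log l := by
        have e : u / 2 = L / (88 * κ) / l := by rw [hu]; field_simp; norm_num
        rw [e, Real.log_div (by positivity) (by positivity), Real.log_div (by positivity) (by positivity),
          hl]
      rw [← this]
      exact Real.log_le_log (by linarith) hlogz
    linarith
  set R := 2 * ⌈10 * κ * l⌉₊ with hR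
  have hRlow : 20 * κ * l ≤ R := by
    have := Nat.le_ceil (10 * κ * l)
    rw [hR]; push_cast; linarith
  have hRup : (R : ℝ) ≤ 22 * κ * l := by
    have := Nat.ceil_lt_add_one (by positivity : 0 ≤ 10 * κ * l)
    rw [hR]; push_cast; linarith
  set N := ⌊x⌋₊ + 1 with hN
  have hNx : (N : ℝ) ≤ 2 * x := by
    have := Nat.floor_le (by linarith : 0 ≤ x)
    rw [hN]; push_cast; linarith
  have hbr := jc_brun E P N R z (fun q hq => (hPmem q hq).1) (by
      intro q hq a ha b hb hab
      have h1 := (hPmem q hq).2.2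
      have h2 : a < q := by exact_mod_cast lt_of_le_of_lt (hEL a ha) h1
      have h3 : b < q := by exact_mod_cast lt_of_le_of_lt (hEL b hb) h1
      simpa [Nat.mod_eq_of_lt h2, Nat.mod_eq_of_lt h3] using hab) ⟨⌈10 * κ * l⌉₊, by rw [hR]; ring⟩
    (by
      have : P ⊆ Finset.Icc 1 z := by
        intro q hq
        rw [Finset.mem_Icc]
        exact ⟨(hPmem q hq).1.one_lt.le, (hPmem q hq).2.1⟩
      simpa using Finset.card_le_card this) (by omega) (by
      intro q hq
      have h1 := (hPmem q hq).2.2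
      rw [hE]
      have : (κ : ℝ) ≤ q := by linarith
      exact_mod_cast this)
  rw [hE, ← hB] at hbr
  have hcount : (primePi x E : ℝ) ≤ z +
      (((Finset.range N).filter (fun m => ∀ q ∈ P, ∀ h ∈ E, ¬ q ∣ m + h)).card : ℝ) := by
    have hsub : {m : ℕ | 0 < m ∧ (m : ℝ) ≤ x ∧ ∀ d ∈ E, Nat.Prime (m + d)} ⊆
        ((Finset.Icc 1 z ∪ (Finset.range N).filter (fun m => ∀ q ∈ P, ∀ h ∈ E, ¬ q ∣ m + h) :
          Finset ℕ) : Set ℕ) := by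
      rintro m ⟨hm0, hmx, hm⟩
      rw [Finset.mem_coe, Finset.mem_union, Finset.mem_Icc, Finset.mem_filter, Finset.mem_range]
      by_cases hmz : m ≤ z
      · left; exact ⟨hm0, hmz⟩
      · right
        refine ⟨?_, ?_⟩
        · have := Nat.le_floor hmx; omega
        · intro q hq h hh hdvd
          have h1 := (Nat.prime_dvd_prime_iff_eq (hPmem q hq).1 (hm h hh)).1 hdvd
          have := (hPmem q hq).2.1
          omega
    have h1 := Set.ncard_le_ncard hsub (Finset.finite_toSet _)
    rw [Set.ncard_coe_finset] at h1
    have h2 := h1.trans (Finset.card_union_le _ _)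
    rw [Nat.card_Icc] at h2
    unfold primePi
    have h3 : ({m : ℕ | 0 < m ∧ (m : ℝ) ≤ x ∧ ∀ d ∈ E, Nat.Prime (m + d)}.ncard) ≤ z +
      ((Finset.range N).filter (fun m => ∀ q ∈ P, ∀ h ∈ E, ¬ q ∣ m + h)).card := by omega
    exact_mod_cast h3
  clear_value B P N R z w u
  have hzexp : (z : ℝ) ≤ Real.exp (L / 2) := hzle.trans (Real.exp_le_exp.2 huleL)
  have hzR : (z : ℝ) ^ R ≤ Real.exp (L / 2) := by
    calc (z : ℝ) ^ R ≤ (Real.exp u) ^ R := pow_le_pow_left₀ (by positivity) hzle _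
      _ = Real.exp (R * u) := by rw [← Real.exp_nat_mul]
      _ ≤ Real.exp (L / 2) := by
        apply Real.exp_le_exp.2
        rw [← huL, mul_comm]; exact mul_le_mul_of_nonneg_left hRup (by linarith)
  have t1 : Real.exp (-(κ * B)) ≤ Real.exp (-κ * l) * Real.exp (l / 8) := by
    rw [← Real.exp_add]
    apply Real.exp_le_exp.2
    have := mul_le_mul_of_nonneg_left hBlow hk0
    linarith
  have t2 : Real.exp (-R + Real.exp 1 * κ * B) ≤ Real.exp (-κ * l) := by
    apply Real.exp_le_exp.2
    have he : Real.exp 1 ≤ 2.75 := by have := Real.exp_one_lt_d9; linarith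
    have h1 : Real.exp 1 * κ * B ≤ 2.75 * κ * (12 + 4 * l) := by
      have h2 : Real.exp 1 * κ * B ≤ Real.exp 1 * κ * (12 + 4 * l) :=
        mul_le_mul_of_nonneg_left hBup (by positivity)
      have h3 : Real.exp 1 * κ * (12 + 4 * l) ≤ 2.75 * κ * (12 + 4 * l) := by
        apply mul_le_mul_of_nonneg_right _ (by linarith)
        exact mul_le_mul_of_nonneg_right he hk0
      linarith
    have h4 : κ * 24 ≤ κ * l := mul_le_mul_of_nonneg_left c1 hk0
    linarith
  set g := Real.exp (l / 8) with hg
  have hg4 : 4 ≤ g := by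
    have := Real.add_one_le_exp (l / 8); linarith
  set F := Real.exp (-κ * l) with hF
  have hF0 : 0 < F := Real.exp_pos _
  have hgoal : Real.exp (-((κ : ℝ) - 1 / 4) * l) = F * (g * g) := by
    rw [hF, hg, ← Real.exp_add, ← Real.exp_add]; ring_nf
  have hg8 : 4 * g ≤ g * g := mul_le_mul_of_nonneg_right hg4 (by linarith)
  have t3 : 2 * Real.exp κ * Real.exp (L / 2) ≤ x * F := by
    have h2 : (2 : ℝ) ≤ Real.exp 1 := by linarith [Real.add_one_le_exp (1 : ℝ)]
    calc 2 * Real.exp κ * Real.exp (L / 2) ≤ Real.exp 1 * Real.exp κ * Real.exp (L / 2) := by gcongr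
      _ = Real.exp (1 + κ + L / 2) := by rw [Real.exp_add, Real.exp_add]
      _ ≤ Real.exp (L + -κ * l) := by apply Real.exp_le_exp.2; linarith
      _ = x * F := by rw [Real.exp_add, hxL]
  have hek : 1 ≤ Real.exp (κ : ℝ) := Real.one_le_exp (by linarith)
  have t4 : (z : ℝ) ≤ Real.exp κ * Real.exp (L / 2) := by
    exact hzexp.trans (le_mul_of_one_le_left (Real.exp_pos _).le hek)
  have t5 : (z : ℝ) ^ R * Real.exp κ ≤ Real.exp κ * Real.exp (L / 2) := by
    rw [mul_comm]; exact mul_le_mul_of_nonneg_left hzR (by linarith)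
  have t6 : N * (Real.exp (-(κ * B)) + Real.exp (-R + Real.exp 1 * κ * B)) ≤ 2 * x * (F * g + F) :=
    mul_le_mul hNx (by linarith) (by positivity) (by linarith)
  rw [hgoal]
  have hxF : 0 < x * F := by positivity
  have : x * F * (2 * g + 3) ≤ x * F * (g * g) := by
    apply mul_le_mul_of_nonneg_left _ hxF.le
    linarith
  linarith

lemma jc_sieve (κ : ℕ) (hκ : 1 ≤ κ) : ∀ᶠ x : ℝ in Filter.atTop, ∀ E : Finset ℕ, E.card = κ →
    (∀ h ∈ E, (h : ℝ) ≤ Real.log x) →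
    (primePi x E : ℝ) ≤ x * Real.exp (-((κ : ℝ) - 1 / 4) * Real.log (Real.log x)) := by
  have h := (Real.tendsto_log_atTop.comp Real.tendsto_log_atTop).eventually
    (jc_eventually_params κ (by exact_mod_cast hκ))
  filter_upwards [h, Filter.eventually_gt_atTop 1] with x hx hx1 E hE hEL
  exact jc_sieve_aux κ hκ x hx1 _ rfl hx.1 hx.2.1 hx.2.2.1 hx.2.2.2.1 hx.2.2.2.2 E hE hEL

/-! ### Part 4: the singular series -/

/-- Local factor of the singular series. -/
noncomputable def jcFac (D : Finset ℕ) (q : ℕ) : ℝ :=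
  ((1 - 1 / (q : ℝ)) ^ D.card)⁻¹ * (1 - (nu D q : ℝ) / (q : ℝ))

lemma jc_nu_le_card (D : Finset ℕ) (q : ℕ) : nu D q ≤ D.card := Finset.card_image_le

lemma jc_nu_eq_card (D : Finset ℕ) (q : ℕ) (h : Set.InjOn (fun a => a % q) (D : Set ℕ)) :
    nu D q = D.card := Finset.card_image_of_injOn h

lemma jc_nu_le (D : Finset ℕ) (q : ℕ) (hq : 0 < q) : nu D q ≤ q := by
  have : D.image (· % q) ⊆ Finset.range q := by
    intro r hr
    rw [Finset.mem_image] at hr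
    obtain ⟨a, -, rfl⟩ := hr
    exact Finset.mem_range.2 (Nat.mod_lt _ hq)
  simpa [nu] using Finset.card_le_card this

lemma jc_nu_pos (D : Finset ℕ) (hD : D.Nonempty) (q : ℕ) : 1 ≤ nu D q :=
  Finset.card_pos.2 (hD.image _)

lemma jc_inv_bounds (q : ℕ) (hq : q.Prime) : 0 < 1 - 1 / (q : ℝ) ∧ 1 - 1 / (q : ℝ) ≤ 1 ∧
    (0 : ℝ) < 1 / q := by
  have h2 : (2 : ℝ) ≤ q := by exact_mod_cast hq.two_le
  have h1 : 1 / (q : ℝ) ≤ 1 / 2 := one_div_le_one_div_of_le (by norm_num) h2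
  have h0 : 0 < 1 / (q : ℝ) := by positivity
  refine ⟨by linarith, by linarith, h0⟩

lemma jcFac_nonneg (D : Finset ℕ) (q : ℕ) (hq : q.Prime) : 0 ≤ jcFac D q := by
  obtain ⟨h1, h2, h3⟩ := jc_inv_bounds q hq
  have hq0 : (0 : ℝ) < q := by exact_mod_cast hq.pos
  apply mul_nonneg
  · positivity
  · have : (nu D q : ℝ) ≤ q := by exact_mod_cast jc_nu_le D q hq.pos
    rw [sub_nonneg, div_le_one hq0]; exact this

lemma jcFac_pos (D : Finset ℕ) (q : ℕ) (hq : q.Prime) (h : nu D q ≠ q) : 0 < jcFac D q := by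
  obtain ⟨h1, h2, h3⟩ := jc_inv_bounds q hq
  have hq0 : (0 : ℝ) < q := by exact_mod_cast hq.pos
  apply mul_pos
  · positivity
  · have : (nu D q : ℝ) < q := by exact_mod_cast lt_of_le_of_ne (jc_nu_le D q hq.pos) h
    rw [sub_pos, div_lt_one hq0]; exact this

lemma jc_pow_le (K : ℕ) (t : ℝ) (h0 : 0 ≤ t) (h1 : t ≤ 1) :
    (1 - t) ^ K ≤ 1 - K * t + (K : ℝ) ^ 2 * t ^ 2 := by
  induction K with
  | zero => simp
  | succ K ih =>
    rw [pow_succ]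
    have := mul_le_mul_of_nonneg_right ih (by linarith : 0 ≤ 1 - t)
    refine this.trans ?_
    push_cast
    have hK : (0 : ℝ) ≤ K := by positivity
    have : 0 ≤ (K : ℝ) ^ 2 * t ^ 3 := by positivity
    have : 0 ≤ (K + 1 : ℝ) * t ^ 2 := by positivity
    nlinarith

lemma jcFac_generic_le (D : Finset ℕ) (q : ℕ) (hq : q.Prime) (h : nu D q = D.card) :
    jcFac D q ≤ 1 := by
  obtain ⟨h1, h2, h3⟩ := jc_inv_bounds q hq
  unfold jcFac
  rw [h, inv_mul_le_iff₀ (by positivity), mul_one]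
  have := one_add_mul_le_pow (a := -(1 / (q : ℝ))) (by linarith) D.card
  rw [← sub_eq_add_neg (1 : ℝ) (1 / (q : ℝ))] at this
  refine le_trans (le_of_eq ?_) this
  ring

lemma jcFac_generic_ge (D : Finset ℕ) (q : ℕ) (hq : q.Prime) (h : nu D q = D.card)
    (hq2 : 2 * D.card ≤ q) : 1 - 2 * (D.card : ℝ) ^ 2 * ((q : ℝ) ^ 2)⁻¹ ≤ jcFac D q := by
  obtain ⟨h1, h2, h3⟩ := jc_inv_bounds q hq
  unfold jcFac
  have hp := jc_pow_le D.card (1 / (q : ℝ)) h3.le (by linarith)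
  rw [h, le_inv_mul_iff₀ (by positivity)]
  have hq0 : (0 : ℝ) < q := by exact_mod_cast hq.pos
  set t := 1 / (q : ℝ) with ht
  have e1 : ((q : ℝ) ^ 2)⁻¹ = t ^ 2 := by rw [ht]; field_simp
  have e2 : (D.card : ℝ) / q = D.card * t := by rw [ht]; ring
  have e3 : (D.card : ℝ) * t ≤ 1 / 2 := by
    rw [← e2, div_le_iff₀ hq0]
    have : ((2 * D.card : ℕ) : ℝ) ≤ q := by exact_mod_cast hq2
    push_cast at this; linarith
  rw [e1, e2]
  set s := (D.card : ℝ) * t with hs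
  have hs0 : 0 ≤ s := by positivity
  have e4 : 2 * (D.card : ℝ) ^ 2 * t ^ 2 = 2 * s ^ 2 := by rw [hs]; ring
  have e5 : (1 - t) ^ D.card ≤ 1 - s + s ^ 2 := by
    refine hp.trans (le_of_eq ?_); rw [hs]; ring
  rw [e4]
  have h6 : 0 ≤ 1 - 2 * s ^ 2 := by nlinarith
  refine (mul_le_mul_of_nonneg_right e5 h6).trans ?_
  nlinarith [mul_nonneg hs0 hs0, mul_nonneg (mul_nonneg hs0 hs0) (by linarith : 0 ≤ 1 / 2 - s)]

lemma jc_nu_large (D : Finset ℕ) (q : ℕ) (h : D.sup id < q) : nu D q = D.card := by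
  apply jc_nu_eq_card
  intro a ha b hb hab
  have h1 : a ≤ D.sup id := Finset.le_sup (f := id) ha
  have h2 : b ≤ D.sup id := Finset.le_sup (f := id) hb
  simpa [Nat.mod_eq_of_lt (lt_of_le_of_lt h1 h), Nat.mod_eq_of_lt (lt_of_le_of_lt h2 h)] using hab

lemma jc_sing_tendsto (D : Finset ℕ) :
    Filter.Tendsto (fun n => ∏ q ∈ Nat.primesLE n, jcFac D q) Filter.atTop
      (nhds (singSeries D)) := by
  have e : singSeries D = ∏' n : ℕ, if n.Prime then jcFac D n else 1 := by
    rw [← Nat.Primes.tprod_eq_tprod_ite]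
    rfl
  have hm : Multipliable (fun n : ℕ => if n.Prime then jcFac D n else 1) := by
    have e2 : (fun n : ℕ => if n.Prime then jcFac D n else 1) =
        fun n : ℕ => 1 + (if n.Prime then jcFac D n - 1 else 0) := by
      funext n; split_ifs <;> ring
    rw [e2]
    apply multipliable_one_add_of_summable
    have hs : Summable (fun n : ℕ => 2 * (D.card : ℝ) ^ 2 * ((n : ℝ) ^ 2)⁻¹) :=
      (Real.summable_nat_pow_inv.2 (by norm_num)).mul_left _
    apply Summable.of_norm_bounded_eventually_nat hs
    filter_upwards [Filter.eventually_gt_atTop (D.sup id), Filter.eventually_ge_atTop (2 * D.card)]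
      with n h1 h2
    rw [norm_norm]
    split_ifs with hp
    · have hn := jc_nu_large D n h1
      have g1 := jcFac_generic_le D n hp hn
      have g2 := jcFac_generic_ge D n hp hn h2
      rw [Real.norm_eq_abs, abs_le]
      constructor <;> linarith
    · simp; positivity
  have ht := hm.hasProd.tendsto_prod_nat
  rw [← e] at ht
  have ht2 := ht.comp (Filter.tendsto_add_atTop_nat 1)
  refine ht2.congr ?_
  intro n
  simp only [Function.comp]
  rw [← Finset.prod_filter]
  rfl

lemma jc_one_sub_sum_le (s : Finset ℕ) (a : ℕ → ℝ) (h0 : ∀ i ∈ s, 0 ≤ a i) (h1 : ∀ i ∈ s, a i ≤ 1) :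
    1 - ∑ i ∈ s, a i ≤ ∏ i ∈ s, (1 - a i) ∧ ∏ i ∈ s, (1 - a i) ≤ 1 := by
  classical
  induction s using Finset.induction_on with
  | empty => simp
  | insert i s hi ih =>
    obtain ⟨ih1, ih2⟩ := ih (fun j hj => h0 j (Finset.mem_insert_of_mem hj))
      (fun j hj => h1 j (Finset.mem_insert_of_mem hj))
    have a0 := h0 i (Finset.mem_insert_self _ _)
    have a1 := h1 i (Finset.mem_insert_self _ _)
    have hp : 0 ≤ ∏ i ∈ s, (1 - a i) := Finset.prod_nonneg (fun j hj => by
      have := h1 j (Finset.mem_insert_of_mem hj); linarith)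
    rw [Finset.sum_insert hi, Finset.prod_insert hi]
    constructor <;> nlinarith

lemma jc_primesLE_subset {Y n : ℕ} (h : Y ≤ n) : Nat.primesLE Y ⊆ Nat.primesLE n := by
  intro q hq
  rw [Nat.mem_primesLE] at hq ⊢
  exact ⟨hq.1.trans h, hq.2⟩

lemma jc_mem_rest {Y n q : ℕ} (h : q ∈ Nat.primesLE n \ Nat.primesLE Y) :
    q.Prime ∧ Y < q ∧ q ≤ n := by
  rw [Finset.mem_sdiff, Nat.mem_primesLE, Nat.mem_primesLE] at h
  refine ⟨h.1.2, ?_, h.1.1⟩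
  by_contra hc
  exact h.2 ⟨by omega, h.1.2⟩

lemma jc_sing_lower (D : Finset ℕ) (Y : ℕ) (hY : 2 * D.card ≤ Y) (hY1 : 1 ≤ Y)
    (h : ∀ q : ℕ, q.Prime → Y < q → nu D q = D.card) :
    (∏ q ∈ Nat.primesLE Y, jcFac D q) * (1 - 2 * (D.card : ℝ) ^ 2 / Y) ≤ singSeries D := by
  refine ge_of_tendsto (jc_sing_tendsto D) ?_
  filter_upwards [Filter.eventually_ge_atTop Y] with n hn
  rw [← Finset.prod_sdiff (jc_primesLE_subset hn), mul_comm]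
  apply mul_le_mul_of_nonneg_right _
    (Finset.prod_nonneg (fun q hq => jcFac_nonneg D q (Nat.mem_primesLE.1 hq).2))
  have h1 := (jc_one_sub_sum_le (Nat.primesLE n \ Nat.primesLE Y)
    (fun q => 2 * (D.card : ℝ) ^ 2 * ((q : ℝ) ^ 2)⁻¹) (fun q _ => by positivity) (by
      intro q hq
      obtain ⟨hp, hq1, -⟩ := jc_mem_rest hq
      have hq0 : (0 : ℝ) < q := by exact_mod_cast hp.pos
      rw [mul_inv_le_iff₀ (by positivity), one_mul]
      have : ((2 * D.card : ℕ) : ℝ) ≤ q := by exact_mod_cast (by omega)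
      push_cast at this
      have : (0 : ℝ) ≤ D.card := by positivity
      nlinarith)).1
  have h2 : ∏ q ∈ Nat.primesLE n \ Nat.primesLE Y, (1 - 2 * (D.card : ℝ) ^ 2 * ((q : ℝ) ^ 2)⁻¹) ≤
      ∏ q ∈ Nat.primesLE n \ Nat.primesLE Y, jcFac D q := by
    apply Finset.prod_le_prod
    · intro q hq
      obtain ⟨hp, hq1, -⟩ := jc_mem_rest hq
      have hq0 : (0 : ℝ) < q := by exact_mod_cast hp.pos
      rw [sub_nonneg, mul_inv_le_iff₀ (by positivity), one_mul]
      have : ((2 * D.card : ℕ) : ℝ) ≤ q := by exact_mod_cast (by omega)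
      push_cast at this
      have : (0 : ℝ) ≤ D.card := by positivity
      nlinarith
    · intro q hq
      obtain ⟨hp, hq1, -⟩ := jc_mem_rest hq
      exact jcFac_generic_ge D q hp (h q hp hq1) (by omega)
  have h3 : ∑ q ∈ Nat.primesLE n \ Nat.primesLE Y, ((q : ℝ) ^ 2)⁻¹ ≤ 1 / Y := by
    have h4 := sum_Ioc_inv_sq_le_sub (α := ℝ) (by omega : Y ≠ 0) hn
    have h5 : ∑ q ∈ Nat.primesLE n \ Nat.primesLE Y, ((q : ℝ) ^ 2)⁻¹ ≤
        ∑ i ∈ Finset.Ioc Y n, ((i : ℝ) ^ 2)⁻¹ := by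
      apply Finset.sum_le_sum_of_subset_of_nonneg
      · intro q hq
        obtain ⟨-, h1, h2⟩ := jc_mem_rest hq
        exact Finset.mem_Ioc.2 ⟨h1, h2⟩
      · intros; positivity
    have : (0 : ℝ) ≤ (n : ℝ)⁻¹ := by positivity
    rw [one_div]; linarith
  rw [← Finset.mul_sum] at h1
  have h4 : 2 * (D.card : ℝ) ^ 2 * ∑ q ∈ Nat.primesLE n \ Nat.primesLE Y, ((q : ℝ) ^ 2)⁻¹ ≤
      2 * (D.card : ℝ) ^ 2 / Y := by
    rw [div_eq_mul_one_div]
    exact mul_le_mul_of_nonneg_left h3 (by positivity)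
  linarith

lemma jc_sing_nonneg (D : Finset ℕ) : 0 ≤ singSeries D := by
  refine ge_of_tendsto (jc_sing_tendsto D) (Filter.Eventually.of_forall fun n => ?_)
  exact Finset.prod_nonneg (fun q hq => jcFac_nonneg D q (Nat.mem_primesLE.1 hq).2)

lemma jc_sing_zero (D : Finset ℕ) (h : singSeries D = 0) : ∃ q : ℕ, q.Prime ∧ nu D q = q := by
  by_contra hcon
  push Not at hcon
  set Y := D.sup id + 4 * D.card ^ 2 + 2 * D.card + 1 with hY
  have h1 := jc_sing_lower D Y (by omega) (by omega) (fun q _ hq => jc_nu_large D q (by omega))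
  have h2 : 0 < ∏ q ∈ Nat.primesLE Y, jcFac D q := by
    apply Finset.prod_pos
    intro q hq
    have hp := (Nat.mem_primesLE.1 hq).2
    exact jcFac_pos D q hp (hcon q hp)
  have h3 : 0 < 1 - 2 * (D.card : ℝ) ^ 2 / Y := by
    have hYr : ((4 * D.card ^ 2 + 1 : ℕ) : ℝ) ≤ Y := by exact_mod_cast (by omega)
    push_cast at hYr
    have h0 : (0 : ℝ) ≤ (D.card : ℝ) ^ 2 := by positivity
    rw [sub_pos, div_lt_one (by linarith)]
    linarith
  have := mul_pos h2 h3
  linarith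

lemma jcFac_le (D : Finset ℕ) (k : ℕ) (hk : D.card = k + 1) (q : ℕ) (hq : q.Prime) :
    jcFac D q ≤ ((1 - 1 / (q : ℝ)) ^ k)⁻¹ := by
  obtain ⟨h1, h2, h3⟩ := jc_inv_bounds q hq
  have hn : (1 : ℝ) ≤ nu D q := by
    exact_mod_cast jc_nu_pos D (Finset.card_pos.1 (by omega)) q
  have hq0 : (0 : ℝ) < q := by exact_mod_cast hq.pos
  unfold jcFac
  rw [hk, pow_succ, mul_inv, mul_assoc]
  apply mul_le_of_le_one_right (by positivity)
  rw [inv_mul_le_iff₀ h1, mul_one]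
  have : 1 / (q : ℝ) ≤ nu D q / q := by gcongr
  linarith

lemma jcFac_le_two (D : Finset ℕ) (k : ℕ) (hk : D.card = k + 1) (q : ℕ) (hq : q.Prime)
    (hn : 2 ≤ nu D q) :
    jcFac D q ≤ ((1 - 1 / (q : ℝ)) ^ k)⁻¹ * (1 - 1 / ((q : ℝ) - 1)) := by
  obtain ⟨h1, h2, h3⟩ := jc_inv_bounds q hq
  have hn : (2 : ℝ) ≤ nu D q := by exact_mod_cast hn
  have hq2 : (2 : ℝ) ≤ q := by exact_mod_cast hq.two_le
  have hq0 : (0 : ℝ) < q := by linarith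
  unfold jcFac
  rw [hk, pow_succ, mul_inv, mul_assoc]
  apply mul_le_mul_of_nonneg_left _ (by positivity)
  rw [inv_mul_le_iff₀ h1]
  have h4 : 2 / (q : ℝ) ≤ nu D q / q := by gcongr
  have h5 : (1 - 1 / (q : ℝ)) * (1 - 1 / ((q : ℝ) - 1)) = 1 - 2 / q := by
    have : (q : ℝ) - 1 ≠ 0 := by linarith
    field_simp
    ring
  rw [h5]; linarith

lemma jc_sing_upper (D : Finset ℕ) (k : ℕ) (hk : D.card = k + 1) (p : ℕ) (hp : p.Prime)
    (hnp : 2 ≤ nu D p) (Y : ℕ) (hY : 2 ≤ Y) (hpY : p ≤ Y) (Δ : ℕ) (hΔ : Δ ≠ 0)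
    (hgen : ∀ q : ℕ, q.Prime → ¬ q ∣ Δ → nu D q = D.card) (A : ℝ) (hA : (Δ : ℝ) ≤ Real.exp A) :
    singSeries D ≤ (1 - 1 / ((p : ℝ) - 1)) * (∏ q ∈ Nat.primesLE Y, ((1 - 1 / (q : ℝ)) ^ k)⁻¹) *
      Real.exp (k * A / (Y * Real.log Y)) := by
  classical
  refine le_of_tendsto (jc_sing_tendsto D) ?_
  filter_upwards [Filter.eventually_ge_atTop Y] with n hn
  rw [← Finset.prod_sdiff (jc_primesLE_subset hn), mul_comm]
  have hYr : (2 : ℝ) ≤ Y := by exact_mod_cast hY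
  have hlogY : 0 < Real.log Y := Real.log_pos (by linarith)
  have hp2 : (2 : ℝ) ≤ p := by exact_mod_cast hp.two_le
  have hρ : 0 ≤ 1 - 1 / ((p : ℝ) - 1) := by
    rw [sub_nonneg, div_le_one (by linarith)]; linarith
  have hmain : ∏ q ∈ Nat.primesLE Y, jcFac D q ≤
      (1 - 1 / ((p : ℝ) - 1)) * (∏ q ∈ Nat.primesLE Y, ((1 - 1 / (q : ℝ)) ^ k)⁻¹) := by
    have h1 : ∏ q ∈ Nat.primesLE Y, jcFac D q ≤ ∏ q ∈ Nat.primesLE Y,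
        ((if q = p then (1 - 1 / ((p : ℝ) - 1)) else 1) * ((1 - 1 / (q : ℝ)) ^ k)⁻¹) := by
      apply Finset.prod_le_prod
      · intro q hq; exact jcFac_nonneg D q (Nat.mem_primesLE.1 hq).2
      · intro q hq
        have hqp := (Nat.mem_primesLE.1 hq).2
        split_ifs with he
        · subst he
          rw [mul_comm]
          exact jcFac_le_two D k hk q hqp hnp
        · rw [one_mul]; exact jcFac_le D k hk q hqp
    rw [Finset.prod_mul_distrib, Finset.prod_ite_eq', if_pos (Nat.mem_primesLE.2 ⟨hpY, hp⟩)] at h1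
    exact h1
  have hrest : ∏ q ∈ Nat.primesLE n \ Nat.primesLE Y, jcFac D q ≤
      Real.exp (k * A / (Y * Real.log Y)) := by
    set W := (Nat.primesLE n \ Nat.primesLE Y).filter (fun q => q ∣ Δ) with hW
    have h1 : ∏ q ∈ Nat.primesLE n \ Nat.primesLE Y, jcFac D q ≤
        ∏ q ∈ Nat.primesLE n \ Nat.primesLE Y, (if q ∣ Δ then Real.exp (k / Y) else 1) := by
      apply Finset.prod_le_prod
      · intro q hq; exact jcFac_nonneg D q (jc_mem_rest hq).1
      · intro q hq
        obtain ⟨hqp, hYq, -⟩ := jc_mem_rest hq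
        split_ifs with hd
        · refine (jcFac_le D k hk q hqp).trans ?_
          obtain ⟨b1, b2, b3⟩ := jc_inv_bounds q hqp
          rw [← inv_pow]
          have hq1 : (Y : ℝ) ≤ q - 1 := by
            have : ((Y + 1 : ℕ) : ℝ) ≤ q := by exact_mod_cast hYq
            push_cast at this; linarith
          have e1 : (1 - 1 / (q : ℝ))⁻¹ ≤ Real.exp (1 / Y) := by
            have e2 : (1 - 1 / (q : ℝ))⁻¹ = 1 / ((q : ℝ) - 1) + 1 := by
              have : (q : ℝ) - 1 ≠ 0 := by linarith
              have : (q : ℝ) ≠ 0 := by linarith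
              field_simp
              ring
            rw [e2]
            have e3 : 1 / ((q : ℝ) - 1) ≤ 1 / Y := one_div_le_one_div_of_le (by linarith) hq1
            linarith [Real.add_one_le_exp (1 / (Y : ℝ))]
          refine (pow_le_pow_left₀ (by positivity) e1 k).trans ?_
          rw [← Real.exp_nat_mul, mul_one_div]
        · exact jcFac_generic_le D q hqp (hgen q hqp hd)
    refine h1.trans ?_
    rw [← Finset.prod_filter, Finset.prod_const, ← hW, ← Real.exp_nat_mul]
    apply Real.exp_le_exp.2
    have h2 : Y ^ W.card ≤ Δ := by
      have h3 : Y ^ W.card ≤ ∏ q ∈ W, q := by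
        apply Finset.pow_card_le_prod
        intro q hq
        exact (jc_mem_rest (Finset.mem_filter.1 hq).1).2.1.le
      have h4 : ∏ q ∈ W, q ∣ Δ := by
        apply Finset.prod_primes_dvd
        · intro q hq
          exact (jc_mem_rest (Finset.mem_filter.1 hq).1).1.prime
        · intro q hq
          exact (Finset.mem_filter.1 hq).2
      exact h3.trans (Nat.le_of_dvd (Nat.pos_of_ne_zero hΔ) h4)
    have h5 : W.card * Real.log Y ≤ A := by
      rw [← Real.log_pow, Real.log_le_iff_le_exp (by positivity)]
      refine le_trans ?_ hA
      exact_mod_cast h2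
    rw [mul_div_assoc', div_le_div_iff₀ (by linarith) (by positivity)]
    have : 0 ≤ (k : ℝ) * Y := by positivity
    nlinarith
  apply mul_le_mul hmain hrest
  · exact Finset.prod_nonneg (fun q hq => jcFac_nonneg D q (jc_mem_rest hq).1)
  · apply mul_nonneg hρ
    apply Finset.prod_nonneg
    intro q hq
    obtain ⟨b1, b2, b3⟩ := jc_inv_bounds q (Nat.mem_primesLE.1 hq).2
    positivity

/-- Product of all positive differences. -/
def jcDelta (D : Finset ℕ) : ℕ := ∏ ab ∈ (D ×ˢ D).filter (fun ab => ab.1 < ab.2), (ab.2 - ab.1)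

lemma jcDelta_ne_zero (D : Finset ℕ) : jcDelta D ≠ 0 := by
  unfold jcDelta
  rw [Finset.prod_ne_zero_iff]
  intro ab hab
  have := (Finset.mem_filter.1 hab).2
  omega

lemma jcDelta_gen (D : Finset ℕ) (q : ℕ) (h : ¬ q ∣ jcDelta D) : nu D q = D.card := by
  apply jc_nu_eq_card
  have key : ∀ a ∈ D, ∀ b ∈ D, a < b → a % q = b % q → False := by
    intro a ha b hb hab hmod
    apply h
    have h1 : q ∣ b - a := (Nat.modEq_iff_dvd' hab.le).1 hmod
    refine h1.trans ?_
    exact Finset.dvd_prod_of_mem (fun ab : ℕ × ℕ => ab.2 - ab.1) (a := (a, b))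
      (Finset.mem_filter.2 ⟨Finset.mem_product.2 ⟨ha, hb⟩, hab⟩)
  intro a ha b hb hab
  rcases lt_trichotomy a b with hlt | heq | hlt
  · exact (key a ha b hb hlt hab).elim
  · exact heq
  · exact (key b hb a ha hlt hab.symm).elim

lemma jcDelta_le (D : Finset ℕ) (A : ℝ) (hA : 0 ≤ A) (h : ∀ d ∈ D, (d : ℝ) ≤ Real.exp A) :
    (jcDelta D : ℝ) ≤ Real.exp ((D.card : ℝ) ^ 2 * A) := by
  unfold jcDelta
  push_cast
  have h1 : ∏ ab ∈ (D ×ˢ D).filter (fun ab => ab.1 < ab.2), ((ab.2 - ab.1 : ℕ) : ℝ) ≤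
      ∏ ab ∈ (D ×ˢ D).filter (fun ab => ab.1 < ab.2), Real.exp A := by
    apply Finset.prod_le_prod
    · intros; positivity
    · intro ab hab
      have h2 := (Finset.mem_product.1 (Finset.mem_filter.1 hab).1).2
      refine le_trans ?_ (h _ h2)
      exact_mod_cast Nat.sub_le _ _
  refine h1.trans ?_
  rw [Finset.prod_const, ← Real.exp_nat_mul]
  apply Real.exp_le_exp.2
  apply mul_le_mul_of_nonneg_right _ hA
  have h3 : ((D ×ˢ D).filter (fun ab => ab.1 < ab.2)).card ≤ D.card ^ 2 := by
    refine (Finset.card_filter_le _ _).trans ?_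
    rw [Finset.card_product, sq]
  exact_mod_cast h3

/-! ### Part 5: counting lemmas for consecutive primes -/

lemma jc_N_finite (x : ℝ) (D : Finset ℕ) :
    {n : ℕ | ((Nat.nth Nat.Prime (n + D.card) : ℝ) ≤ x) ∧
    (Finset.range D.card).image
      (fun i => Nat.nth Nat.Prime (n + i + 1) - Nat.nth Nat.Prime n) = D}.Finite := by
  apply (Set.finite_Iic ⌊x⌋₊).subset
  rintro n ⟨h1, -⟩
  rw [Set.mem_Iic]
  have h2 := Nat.le_floor h1
  have h3 : n + D.card ≤ Nat.nth Nat.Prime (n + D.card) :=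
    (Nat.nth_strictMono Nat.infinite_setOfPred_prime).le_apply
  omega

lemma jc_nth_le {a b : ℕ} (h : a ≤ b) : Nat.nth Nat.Prime a ≤ Nat.nth Nat.Prime b :=
  (Nat.nth_strictMono Nat.infinite_setOfPred_prime).monotone h

lemma jc_nth_lt {a b : ℕ} (h : a < b) : Nat.nth Nat.Prime a < Nat.nth Nat.Prime b :=
  (Nat.nth_strictMono Nat.infinite_setOfPred_prime) h

lemma jc_pi_finite (x : ℝ) (D : Finset ℕ) :
    {m : ℕ | 0 < m ∧ (m : ℝ) ≤ x ∧ ∀ d ∈ D, Nat.Prime (m + d)}.Finite := by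
  apply (Set.finite_Iic ⌊x⌋₊).subset
  rintro m ⟨-, h, -⟩
  exact Nat.le_floor h

lemma jc_N_le_primePi (x : ℝ) (D : Finset ℕ) : Ncham x D ≤ primePi x (insert 0 D) := by
  unfold Ncham primePi
  refine Set.ncard_le_ncard_of_injOn (fun n => Nat.nth Nat.Prime n) ?_ ?_ (jc_pi_finite x _)
  · rintro n ⟨h1, h2⟩
    have hp : Nat.Prime (Nat.nth Nat.Prime n) := Nat.prime_nth_prime n
    refine ⟨hp.pos, ?_, ?_⟩
    · refine le_trans ?_ h1
      exact_mod_cast jc_nth_le (by omega)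
    · intro d hd
      rw [Finset.mem_insert] at hd
      rcases hd with rfl | hd
      · simp
      · rw [← h2, Finset.mem_image] at hd
        obtain ⟨i, -, rfl⟩ := hd
        have := jc_nth_le (a := n) (b := n + i + 1) (by omega)
        change Nat.Prime (Nat.nth Nat.Prime n + (Nat.nth Nat.Prime (n + i + 1) - Nat.nth Nat.Prime n))
        rw [Nat.add_sub_cancel' this]
        exact Nat.prime_nth_prime _
  · intro a _ b _ hab
    exact (Nat.nth_strictMono Nat.infinite_setOfPred_prime).injective hab

lemma jc_tele (k n0 : ℕ) : ∑ n ∈ Finset.range n0, (Nat.nth Nat.Prime (n + k) : ℝ) ≤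
    ∑ n ∈ Finset.range n0, (Nat.nth Nat.Prime n : ℝ) + k * Nat.nth Nat.Prime (n0 - 1 + k) := by
  induction k with
  | zero => simp
  | succ k ih =>
    have h1 : ∑ n ∈ Finset.range n0, (Nat.nth Nat.Prime (n + (k + 1)) : ℝ) ≤
        ∑ n ∈ Finset.range n0, (Nat.nth Nat.Prime (n + k) : ℝ) +
          Nat.nth Nat.Prime (n0 - 1 + (k + 1)) := by
      rcases n0 with _ | m
      · simp
      · have e1 := Finset.sum_range_succ (fun n => (Nat.nth Nat.Prime (n + (k + 1)) : ℝ)) m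
        have e2 := Finset.sum_range_succ' (fun n => (Nat.nth Nat.Prime (n + k) : ℝ)) m
        rw [e1, e2]
        have e3 : ∑ i ∈ Finset.range m, (Nat.nth Nat.Prime (i + 1 + k) : ℝ) =
          ∑ n ∈ Finset.range m, (Nat.nth Nat.Prime (n + (k + 1)) : ℝ) := by
          apply Finset.sum_congr rfl
          intro i _
          rw [show i + 1 + k = i + (k + 1) by omega]
        rw [e3, Nat.add_sub_cancel]
        have : (0 : ℝ) ≤ Nat.nth Nat.Prime (0 + k) := by positivity
        linarith
    have h2 : (Nat.nth Nat.Prime (n0 - 1 + k) : ℝ) ≤ Nat.nth Nat.Prime (n0 - 1 + (k + 1)) := by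
      exact_mod_cast jc_nth_le (by omega)
    have h3 : (k : ℝ) * Nat.nth Nat.Prime (n0 - 1 + k) ≤
      k * Nat.nth Nat.Prime (n0 - 1 + (k + 1)) := mul_le_mul_of_nonneg_left h2 (by positivity)
    push_cast
    linarith

lemma jc_N_large (x : ℝ) (hx : 0 ≤ x) (D : Finset ℕ) (d : ℕ) (hd : d ∈ D) :
    (Ncham x D : ℝ) * d ≤ D.card * x := by
  classical
  set S := {n : ℕ | ((Nat.nth Nat.Prime (n + D.card) : ℝ) ≤ x) ∧
    (Finset.range D.card).image
      (fun i => Nat.nth Nat.Prime (n + i + 1) - Nat.nth Nat.Prime n) = D} with hS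
  have hfin : S.Finite := jc_N_finite x D
  have hN : Ncham x D = hfin.toFinset.card := by
    rw [← Set.ncard_eq_toFinset_card S hfin]; rfl
  rcases Finset.eq_empty_or_nonempty hfin.toFinset with he | hne
  · rw [hN, he]; simp; positivity
  · set n1 := hfin.toFinset.max' hne with hn1
    have hn1S : n1 ∈ S := hfin.mem_toFinset.1 (Finset.max'_mem _ hne)
    have hsub : hfin.toFinset ⊆ Finset.range (n1 + 1) := by
      intro n hn
      rw [Finset.mem_range]
      have := Finset.le_max' _ n hn
      omega
    have h1 : ∀ n ∈ hfin.toFinset,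
        (d : ℝ) ≤ (Nat.nth Nat.Prime (n + D.card) : ℝ) - Nat.nth Nat.Prime n := by
      intro n hn
      have hnS := (hfin.mem_toFinset.1 hn).2
      rw [← hnS, Finset.mem_image] at hd
      obtain ⟨i, hi, rfl⟩ := hd
      rw [Finset.mem_range] at hi
      have a1 := jc_nth_le (a := n) (b := n + i + 1) (by omega)
      have a2 := jc_nth_le (a := n + i + 1) (b := n + D.card) (by omega)
      rw [Nat.cast_sub a1]
      have : (Nat.nth Nat.Prime (n + i + 1) : ℝ) ≤ Nat.nth Nat.Prime (n + D.card) := by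
        exact_mod_cast a2
      linarith
    have h2 : (Ncham x D : ℝ) * d ≤
        ∑ n ∈ hfin.toFinset, ((Nat.nth Nat.Prime (n + D.card) : ℝ) - Nat.nth Nat.Prime n) := by
      rw [hN, ← nsmul_eq_mul]
      exact Finset.card_nsmul_le_sum _ _ _ h1
    have h3 : ∑ n ∈ hfin.toFinset, ((Nat.nth Nat.Prime (n + D.card) : ℝ) - Nat.nth Nat.Prime n) ≤
        ∑ n ∈ Finset.range (n1 + 1), ((Nat.nth Nat.Prime (n + D.card) : ℝ) - Nat.nth Nat.Prime n) := by
      apply Finset.sum_le_sum_of_subset_of_nonneg hsub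
      intro n _ _
      rw [sub_nonneg]
      exact_mod_cast jc_nth_le (by omega)
    have h4 := jc_tele D.card (n1 + 1)
    rw [Nat.add_sub_cancel] at h4
    simp only [Finset.sum_sub_distrib] at h2 h3
    have h5 : (D.card : ℝ) * Nat.nth Nat.Prime (n1 + D.card) ≤ D.card * x :=
      mul_le_mul_of_nonneg_left hn1S.1 (by positivity)
    linarith

lemma jc_pi_inadm (x : ℝ) (D : Finset ℕ) (q : ℕ) (hq : q.Prime) (h : nu D q = q) :
    primePi x D ≤ q := by
  have himg : D.image (· % q) = Finset.range q := by
    apply Finset.eq_of_subset_of_card_le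
    · intro r hr
      rw [Finset.mem_image] at hr
      obtain ⟨a, -, rfl⟩ := hr
      exact Finset.mem_range.2 (Nat.mod_lt _ hq.pos)
    · rw [Finset.card_range]; exact h.ge
  have hsub : {m : ℕ | 0 < m ∧ (m : ℝ) ≤ x ∧ ∀ d ∈ D, Nat.Prime (m + d)} ⊆
      ((Finset.Icc 1 q : Finset ℕ) : Set ℕ) := by
    rintro m ⟨hm0, -, hm⟩
    have hr : ((q - 1) * m) % q ∈ D.image (· % q) := by
      rw [himg]; exact Finset.mem_range.2 (Nat.mod_lt _ hq.pos)
    rw [Finset.mem_image] at hr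
    obtain ⟨d, hd, hmod⟩ := hr
    have h1 : m + d ≡ m + (q - 1) * m [MOD q] := Nat.ModEq.add_left m hmod
    have h2 : m + (q - 1) * m = q * m := by
      obtain ⟨r, rfl⟩ := Nat.exists_eq_add_of_le hq.one_lt.le
      simp; ring
    rw [h2] at h1
    have h3 : q ∣ m + d :=
      (Nat.modEq_zero_iff_dvd).1 (h1.trans ((Nat.modEq_zero_iff_dvd).2 (dvd_mul_right _ _)))
    have h4 := (Nat.prime_dvd_prime_iff_eq hq (hm d hd)).1 h3
    rw [Finset.mem_coe, Finset.mem_Icc]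
    omega
  have := Set.ncard_le_ncard hsub (Finset.finite_toSet _)
  rw [Set.ncard_coe_finset, Nat.card_Icc] at this
  unfold primePi
  omega

lemma jc_consec (D : Finset ℕ) (M m : ℕ) (hpos : ∀ d ∈ D, 0 < d) (hM : ∀ d ∈ D, d ≤ M)
    (hm : m.Prime) (hD : ∀ d ∈ D, Nat.Prime (m + d))
    (hno : ∀ h, 0 < h → h ≤ M → Nat.Prime (m + h) → h ∈ D) :
    (Finset.range D.card).image (fun i => Nat.nth Nat.Prime (Nat.count Nat.Prime m + i + 1) -
      Nat.nth Nat.Prime (Nat.count Nat.Prime m)) = D := by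
  classical
  set n := Nat.count Nat.Prime m with hn
  have hnm : Nat.nth Nat.Prime n = m := Nat.nth_count hm
  symm
  apply Finset.eq_of_subset_of_card_le
  · intro d hd
    set j := Nat.count Nat.Prime (m + d) with hj
    have hjd : Nat.nth Nat.Prime j = m + d := Nat.nth_count (hD d hd)
    have hd0 := hpos d hd
    have hnj : n < j := by
      rw [← (Nat.nth_strictMono Nat.infinite_setOfPred_prime).lt_iff_lt, hnm, hjd]
      omega
    have hcard : (Finset.Ioc n j).card ≤ D.card := by
      apply Finset.card_le_card_of_injOn (fun i => Nat.nth Nat.Prime i - m)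
      · intro i hi
        rw [Finset.mem_coe, Finset.mem_Ioc] at hi
        have a1 := jc_nth_lt hi.1
        have a2 := jc_nth_le hi.2
        rw [hnm] at a1
        rw [hjd] at a2
        have a3 := hM d hd
        apply hno
        · change 0 < Nat.nth Nat.Prime i - m
          omega
        · change Nat.nth Nat.Prime i - m ≤ M
          omega
        · change Nat.Prime (m + (Nat.nth Nat.Prime i - m))
          rw [Nat.add_sub_cancel' a1.le]
          exact Nat.prime_nth_prime i
      · intro i hi i' hi' he
        rw [Finset.mem_coe, Finset.mem_Ioc] at hi hi'
        have a1 := jc_nth_lt hi.1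
        have a2 := jc_nth_lt hi'.1
        rw [hnm] at a1 a2
        apply (Nat.nth_strictMono Nat.infinite_setOfPred_prime).injective
        change Nat.nth Nat.Prime i - m = Nat.nth Nat.Prime i' - m at he
        change Nat.nth Nat.Prime i = Nat.nth Nat.Prime i'
        omega
    rw [Nat.card_Ioc] at hcard
    rw [Finset.mem_image]
    refine ⟨j - n - 1, Finset.mem_range.2 (by omega), ?_⟩
    rw [show n + (j - n - 1) + 1 = j by omega, hjd, hnm]
    omega
  · exact Finset.card_image_le.trans (by simp)

lemma jc_N_lower (x : ℝ) (D : Finset ℕ) (hcard : 1 ≤ D.card) (M : ℕ)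
    (hpos : ∀ d ∈ D, 0 < d) (hM : ∀ d ∈ D, d ≤ M) (hMD : M ∈ D) :
    primePi x (insert 0 D) ≤ Ncham x D + M +
      ∑ h ∈ (Finset.range M).filter (fun h => h ∉ insert 0 D),
        primePi x (insert h (insert 0 D)) := by
  classical
  have hfin := jc_N_finite x D
  set S := {n : ℕ | ((Nat.nth Nat.Prime (n + D.card) : ℝ) ≤ x) ∧
    (Finset.range D.card).image
      (fun i => Nat.nth Nat.Prime (n + i + 1) - Nat.nth Nat.Prime n) = D} with hS
  have hN : Ncham x D = hfin.toFinset.card := by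
    rw [← Set.ncard_eq_toFinset_card S hfin]; rfl
  have hpi : ∀ E : Finset ℕ, primePi x E = (jc_pi_finite x E).toFinset.card := by
    intro E
    rw [← Set.ncard_eq_toFinset_card _ (jc_pi_finite x E)]; rfl
  have hsub : (jc_pi_finite x (insert 0 D)).toFinset ⊆
      (hfin.toFinset.image (Nat.nth Nat.Prime) ∪ Finset.Ioc (⌊x⌋₊ - M) ⌊x⌋₊) ∪
      ((Finset.range M).filter (fun h => h ∉ insert 0 D)).biUnion
        (fun h => (jc_pi_finite x (insert h (insert 0 D))).toFinset) := by
    intro m hm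
    rw [Set.Finite.mem_toFinset] at hm
    obtain ⟨hm0, hmx, hmp⟩ := hm
    by_cases hex : ∃ h ∈ (Finset.range M).filter (fun h => h ∉ insert 0 D), Nat.Prime (m + h)
    · obtain ⟨h, hh, hhp⟩ := hex
      apply Finset.mem_union_right
      rw [Finset.mem_biUnion]
      refine ⟨h, hh, ?_⟩
      rw [Set.Finite.mem_toFinset]
      refine ⟨hm0, hmx, ?_⟩
      intro d hd
      rw [Finset.mem_insert] at hd
      rcases hd with rfl | hd
      · exact hhp
      · exact hmp d hd
    · push Not at hex
      apply Finset.mem_union_left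
      have hmprime : m.Prime := by simpa using hmp 0 (Finset.mem_insert_self _ _)
      by_cases hmM : ((m + M : ℕ) : ℝ) ≤ x
      · apply Finset.mem_union_left
        rw [Finset.mem_image]
        have himg := jc_consec D M m hpos hM hmprime
          (fun d hd => hmp d (Finset.mem_insert_of_mem hd)) (by
            intro h h0 hhM hhp
            by_contra hcon
            have hne : h ≠ M := fun he => hcon (he ▸ hMD)
            refine hex h ?_ hhp
            rw [Finset.mem_filter, Finset.mem_range, Finset.mem_insert]
            refine ⟨by omega, ?_⟩
            rintro (h1 | h1)
            · omega
            · exact hcon h1)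
        refine ⟨Nat.count Nat.Prime m, ?_, Nat.nth_count hmprime⟩
        rw [Set.Finite.mem_toFinset]
        refine ⟨?_, himg⟩
        refine le_trans ?_ hmM
        have hmem : Nat.nth Nat.Prime (Nat.count Nat.Prime m + (D.card - 1) + 1) -
          Nat.nth Nat.Prime (Nat.count Nat.Prime m) ∈ D := by
          have hmm : Nat.nth Nat.Prime (Nat.count Nat.Prime m + (D.card - 1) + 1) -
              Nat.nth Nat.Prime (Nat.count Nat.Prime m) ∈ (Finset.range D.card).image
              (fun i => Nat.nth Nat.Prime (Nat.count Nat.Prime m + i + 1) -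
                Nat.nth Nat.Prime (Nat.count Nat.Prime m)) :=
            Finset.mem_image.2 ⟨D.card - 1, Finset.mem_range.2 (by omega), rfl⟩
          rw [himg] at hmm
          exact hmm
        have h1 := hM _ hmem
        rw [show Nat.count Nat.Prime m + (D.card - 1) + 1 = Nat.count Nat.Prime m + D.card by omega,
          Nat.nth_count hmprime] at h1
        exact_mod_cast (by omega)
      · apply Finset.mem_union_right
        rw [Finset.mem_Ioc]
        refine ⟨?_, Nat.le_floor hmx⟩
        by_contra hcon
        apply hmM
        have hx0 : 0 ≤ x := le_trans (by positivity) hmx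
        have h1 : m + M ≤ ⌊x⌋₊ := by omega
        exact (Nat.le_floor_iff hx0).1 h1
  rw [hpi, hN]
  refine (Finset.card_le_card hsub).trans ?_
  refine (Finset.card_union_le _ _).trans ?_
  apply Nat.add_le_add
  · refine (Finset.card_union_le _ _).trans ?_
    apply Nat.add_le_add Finset.card_image_le
    rw [Nat.card_Ioc]; omega
  · refine Finset.card_biUnion_le.trans ?_
    apply Finset.sum_le_sum
    intro h _
    rw [hpi]

/-! ### Part 6: the comparison tuple and the final argument -/

def jcTup (k P : ℕ) : Finset ℕ := (Finset.Icc 1 k).image (fun j => j * P)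

lemma jcTup_card (k P : ℕ) (hP : 0 < P) : (jcTup k P).card = k := by
  unfold jcTup
  rw [Finset.card_image_of_injective _ (fun a b h => Nat.eq_of_mul_eq_mul_right hP h)]
  simp

lemma jcTup_mem (k P d : ℕ) : d ∈ jcTup k P ↔ ∃ j, 1 ≤ j ∧ j ≤ k ∧ j * P = d := by
  unfold jcTup
  simp [and_assoc]

lemma jcTup_zero_notMem (k P : ℕ) (hP : 0 < P) : 0 ∉ jcTup k P := by
  rw [jcTup_mem]
  rintro ⟨j, h1, -, h2⟩
  have := Nat.mul_pos h1 hP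
  omega

lemma jcTup_insert_card (k P : ℕ) (hP : 0 < P) : (insert 0 (jcTup k P)).card = k + 1 := by
  rw [Finset.card_insert_of_notMem (jcTup_zero_notMem k P hP), jcTup_card k P hP]

lemma jcTup_insert_mem (k P d : ℕ) (h : d ∈ insert 0 (jcTup k P)) : ∃ j, j ≤ k ∧ d = j * P := by
  rw [Finset.mem_insert, jcTup_mem] at h
  rcases h with rfl | ⟨j, -, h2, h3⟩
  · exact ⟨0, by omega, by simp⟩
  · exact ⟨j, h2, h3.symm⟩

lemma jcTup_nu_one (k P q : ℕ) (h : q ∣ P) : nu (insert 0 (jcTup k P)) q = 1 := by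
  unfold nu
  rw [Finset.card_eq_one]
  refine ⟨0, ?_⟩
  ext r
  rw [Finset.mem_image, Finset.mem_singleton]
  constructor
  · rintro ⟨d, hd, rfl⟩
    obtain ⟨j, -, rfl⟩ := jcTup_insert_mem k P d hd
    exact Nat.mod_eq_zero_of_dvd (h.mul_left j)
  · rintro rfl
    exact ⟨0, Finset.mem_insert_self _ _, by simp⟩

lemma jcTup_nu_full (k P q : ℕ) (h : Nat.Coprime q P) (hkq : k < q) :
    nu (insert 0 (jcTup k P)) q = (insert 0 (jcTup k P)).card := by
  apply jc_nu_eq_card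
  intro a ha b hb hab
  obtain ⟨i, hi, rfl⟩ := jcTup_insert_mem k P a ha
  obtain ⟨j, hj, rfl⟩ := jcTup_insert_mem k P b hb
  have h1 : i * P ≡ j * P [MOD q] := hab
  have h2 : i ≡ j [MOD q] := Nat.ModEq.cancel_right_of_coprime h h1
  rw [h2.eq_of_lt_of_lt (by omega) (by omega)]

lemma jc_prime_dvd_primorial {q Y : ℕ} (hq : q.Prime) (h : q ≤ Y) : q ∣ primorial Y := by
  unfold primorial
  exact Finset.dvd_prod_of_mem (fun p => p) (by simp [hq]; omega)

lemma jc_prime_coprime_primorial {q Y : ℕ} (hq : q.Prime) (h : Y < q) :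
    Nat.Coprime q (primorial Y) := by
  unfold primorial
  apply Nat.Coprime.prod_right
  intro p hp
  rw [Finset.mem_filter, Finset.mem_range] at hp
  rw [Nat.coprime_primes hq hp.2]
  omega

lemma jcTup_sing (k Y : ℕ) (hY : 2 * (k + 1) ≤ Y) :
    (∏ q ∈ Nat.primesLE Y, ((1 - 1 / (q : ℝ)) ^ k)⁻¹) * (1 - 2 * ((k : ℝ) + 1) ^ 2 / Y) ≤
      singSeries (insert 0 (jcTup k (primorial Y))) := by
  have hP : 0 < primorial Y := primorial_pos Y
  have hc := jcTup_insert_card k (primorial Y) hP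
  have h := jc_sing_lower (insert 0 (jcTup k (primorial Y))) Y (by rw [hc]; exact hY) (by omega)
    (fun q hq hqY => jcTup_nu_full k _ q (jc_prime_coprime_primorial hq hqY) (by omega))
  rw [hc] at h
  push_cast at h
  refine le_trans (le_of_eq ?_) h
  congr 1
  apply Finset.prod_congr rfl
  intro q hq
  obtain ⟨hqY, hqp⟩ := Nat.mem_primesLE.1 hq
  unfold jcFac
  rw [hc, jcTup_nu_one k _ q (jc_prime_dvd_primorial hqp hqY)]
  have h1 := (jc_inv_bounds q hqp).1
  rw [pow_succ, mul_inv, Nat.cast_one, mul_assoc, inv_mul_cancel₀ h1.ne', mul_one]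

lemma jc_MM_lower (k Y : ℕ) (hk : 1 ≤ k) (c : ℝ) (hc : 1 ≤ c) (h : c ≤ Real.log Y) :
    c ≤ ∏ q ∈ Nat.primesLE Y, ((1 - 1 / (q : ℝ)) ^ k)⁻¹ := by
  have h1 := jc_log_le_prod Y
  have h2 : ∏ q ∈ Nat.primesLE Y, ((1 - 1 / (q : ℝ)) ^ k)⁻¹ =
      (∏ q ∈ Nat.primesLE Y, (1 - 1 / (q : ℝ))⁻¹) ^ k := by
    rw [← Finset.prod_pow]
    apply Finset.prod_congr rfl
    intro q _
    rw [inv_pow]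
  rw [h2]
  have h3 := h.trans h1
  exact h3.trans (le_self_pow₀ (hc.trans h3) (by omega))

lemma jc_N_tup_lower (k Y : ℕ) (hk : 1 ≤ k) (x L l ε : ℝ) (hL : L = Real.log x)
    (hLl : Real.exp l = L) (hL1 : 1 ≤ L) (hx : 0 < x) (hε : 0 < ε)
    (hsv : ∀ E : Finset ℕ, E.card = k + 2 → (∀ h ∈ E, (h : ℝ) ≤ L) →
      (primePi x E : ℝ) ≤ x * Real.exp (-(((k + 2 : ℕ) : ℝ) - 1 / 4) * l))
    (hPl : (primorial Y : ℝ) ≤ Real.exp (l / 4))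
    (b5 : k * Real.exp (l / 4) ≤ Real.exp l)
    (b6 : k ≤ ε / 2 * Real.exp (l / 2))
    (b7 : L ^ (k + 2) ≤ ε / 2 * x) :
    (primePi x (insert 0 (jcTup k (primorial Y))) : ℝ) ≤
      Ncham x (jcTup k (primorial Y)) + ε * (x / L ^ (k + 1)) := by
  set P := primorial Y with hPdef
  have hP : 0 < P := primorial_pos Y
  have hc := jcTup_card k P hP
  have hc0 := jcTup_insert_card k P hP
  have hL0 : 0 < L := by linarith
  have hkP : ((k * P : ℕ) : ℝ) ≤ k * Real.exp (l / 4) := by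
    push_cast
    exact mul_le_mul_of_nonneg_left hPl (by positivity)
  have hkPL : ((k * P : ℕ) : ℝ) ≤ L := by linarith
  have hmem : ∀ d ∈ insert 0 (jcTup k P), d ≤ k * P := by
    intro d hd
    obtain ⟨j, hj, rfl⟩ := jcTup_insert_mem k P d hd
    exact Nat.mul_le_mul_right P hj
  have h := jc_N_lower x (jcTup k P) (by omega) (k * P)
    (fun d hd => Nat.pos_of_ne_zero (fun h0 => jcTup_zero_notMem k P hP (h0 ▸ hd)))
    (fun d hd => hmem d (Finset.mem_insert_of_mem hd))
    ((jcTup_mem k P _).2 ⟨k, hk, le_rfl, rfl⟩)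
  have hsum : (∑ h ∈ (Finset.range (k * P)).filter (fun h => h ∉ insert 0 (jcTup k P)),
      (primePi x (insert h (insert 0 (jcTup k P))) : ℝ)) ≤
      ((k * P : ℕ) : ℝ) * (x * Real.exp (-(((k + 2 : ℕ) : ℝ) - 1 / 4) * l)) := by
    have hb : ∀ h ∈ (Finset.range (k * P)).filter (fun h => h ∉ insert 0 (jcTup k P)),
        (primePi x (insert h (insert 0 (jcTup k P))) : ℝ) ≤
          x * Real.exp (-(((k + 2 : ℕ) : ℝ) - 1 / 4) * l) := by
      intro h hh
      rw [Finset.mem_filter, Finset.mem_range] at hh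
      apply hsv
      · rw [Finset.card_insert_of_notMem hh.2, hc0]
      · intro d hd
        refine le_trans ?_ hkPL
        rw [Finset.mem_insert] at hd
        rcases hd with rfl | hd
        · exact_mod_cast hh.1.le
        · exact_mod_cast hmem d hd
    refine (Finset.sum_le_card_nsmul _ _ _ hb).trans ?_
    rw [nsmul_eq_mul]
    apply mul_le_mul_of_nonneg_right _ (by positivity)
    have := Finset.card_filter_le (Finset.range (k * P)) (fun h => h ∉ insert 0 (jcTup k P))
    rw [Finset.card_range] at this
    exact_mod_cast this
  have hcast : (primePi x (insert 0 (jcTup k P)) : ℝ) ≤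
      Ncham x (jcTup k P) + ((k * P : ℕ) : ℝ) +
      ∑ h ∈ (Finset.range (k * P)).filter (fun h => h ∉ insert 0 (jcTup k P)),
      (primePi x (insert h (insert 0 (jcTup k P))) : ℝ) := by
    exact_mod_cast h
  have hT : 0 < x / L ^ (k + 1) := by positivity
  have h1 : ((k * P : ℕ) : ℝ) ≤ ε / 2 * (x / L ^ (k + 1)) := by
    refine hkPL.trans ?_
    rw [← mul_div_assoc, le_div_iff₀ (by positivity)]
    calc L * L ^ (k + 1) = L ^ (k + 2) := by ring
      _ ≤ _ := b7
  have h2 : ((k * P : ℕ) : ℝ) * (x * Real.exp (-(((k + 2 : ℕ) : ℝ) - 1 / 4) * l)) ≤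
      ε / 2 * (x / L ^ (k + 1)) := by
    have e1 : x / L ^ (k + 1) = x * Real.exp (-((k : ℝ) + 1) * l) := by
      rw [← hLl, ← Real.exp_nat_mul, div_eq_mul_inv, ← Real.exp_neg]
      congr 2
      push_cast; ring
    have e2 : Real.exp (-(((k + 2 : ℕ) : ℝ) - 1 / 4) * l) =
        Real.exp (-((k : ℝ) + 1) * l) * Real.exp (-(l / 4)) * (Real.exp (l / 2))⁻¹ := by
      rw [← Real.exp_neg, ← Real.exp_add, ← Real.exp_add]
      congr 1
      push_cast; ring
    have e3 : Real.exp (l / 4) * Real.exp (-(l / 4)) = 1 := by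
      rw [← Real.exp_add]; simp
    calc ((k * P : ℕ) : ℝ) * (x * Real.exp (-(((k + 2 : ℕ) : ℝ) - 1 / 4) * l))
        ≤ (k * Real.exp (l / 4)) * (x * Real.exp (-(((k + 2 : ℕ) : ℝ) - 1 / 4) * l)) :=
          mul_le_mul_of_nonneg_right hkP (by positivity)
      _ = (Real.exp (l / 4) * Real.exp (-(l / 4))) *
          (k * ((x / L ^ (k + 1)) * (Real.exp (l / 2))⁻¹)) := by rw [e1, e2]; ring
      _ = k * ((x / L ^ (k + 1)) * (Real.exp (l / 2))⁻¹) := by rw [e3, one_mul]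
      _ ≤ (ε / 2 * Real.exp (l / 2)) * ((x / L ^ (k + 1)) * (Real.exp (l / 2))⁻¹) :=
          mul_le_mul_of_nonneg_right b6 (by positivity)
      _ = ε / 2 * (x / L ^ (k + 1)) := by
          field_simp
  linarith

/-- Upper bound for the generic case. -/
lemma jc_S_upper (k p Y : ℕ) (hp : p.Prime) (L l ε : ℝ) (hLl : Real.exp l = L)
    (hl : 0 ≤ l) (hY2 : 2 ≤ Y) (hpY : p ≤ Y) (hlY : l ≤ 16 * Y) (hlogY : 0 < Real.log Y)
    (hp1 : 0 ≤ 1 - 1 / ((p : ℝ) - 1))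
    (b3 : Real.exp (16 * k * ((k : ℝ) + 1) ^ 3 / Real.log Y) ≤ 1 + ε)
    (D : Finset ℕ) (hD : D.card = k) (hpos : ∀ d ∈ D, 0 < d)
    (hDL : ∀ d ∈ D, (d : ℝ) ≤ L ^ (k + 1)) (d0 : ℕ) (hd0 : d0 ∈ D) (hpd : ¬ p ∣ d0) :
    singSeries (insert 0 D) ≤ (1 - 1 / ((p : ℝ) - 1)) *
      (∏ q ∈ Nat.primesLE Y, ((1 - 1 / (q : ℝ)) ^ k)⁻¹) * (1 + ε) := by
  have h0 : 0 ∉ D := fun h => absurd (hpos 0 h) (by omega)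
  have hc : (insert 0 D).card = k + 1 := by rw [Finset.card_insert_of_notMem h0, hD]
  have hnu : 2 ≤ nu (insert 0 D) p := by
    unfold nu
    rw [← Nat.lt_iff_add_one_le, Finset.one_lt_card]
    refine ⟨0, ?_, d0 % p, ?_, ?_⟩
    · exact Finset.mem_image.2 ⟨0, Finset.mem_insert_self _ _, by simp⟩
    · exact Finset.mem_image.2 ⟨d0, Finset.mem_insert_of_mem hd0, rfl⟩
    · intro h
      exact hpd (Nat.dvd_of_mod_eq_zero h.symm)
  have hLe : L ^ (k + 1) = Real.exp (((k : ℝ) + 1) * l) := by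
    rw [← hLl, ← Real.exp_nat_mul]; push_cast; rfl
  have hΔ := jcDelta_le (insert 0 D) (((k : ℝ) + 1) * l) (by positivity) (by
    intro d hd
    rw [Finset.mem_insert] at hd
    rcases hd with rfl | hd
    · rw [Nat.cast_zero]; positivity
    · rw [← hLe]; exact hDL d hd)
  rw [hc] at hΔ
  have hS := jc_sing_upper (insert 0 D) k hc p hp hnu Y hY2 hpY (jcDelta (insert 0 D))
    (jcDelta_ne_zero _) (fun q _ hq => jcDelta_gen _ q hq) _ hΔ
  refine hS.trans ?_
  apply mul_le_mul_of_nonneg_left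
  · refine le_trans (Real.exp_le_exp.2 ?_) b3
    have hY0 : (0 : ℝ) < Y := by exact_mod_cast (by omega : 0 < Y)
    rw [div_le_div_iff₀ (by positivity) hlogY]
    push_cast
    have : ((k : ℝ) * ((k : ℝ) + 1) ^ 3 * Real.log Y) * l ≤
      ((k : ℝ) * ((k : ℝ) + 1) ^ 3 * Real.log Y) * (16 * Y) :=
      mul_le_mul_of_nonneg_left hlY (by positivity)
    calc _ = ((k : ℝ) * ((k : ℝ) + 1) ^ 3 * Real.log Y) * l := by ring
      _ ≤ _ := this
      _ = _ := by ring
  · apply mul_nonneg hp1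
    apply Finset.prod_nonneg
    intro q hq
    have := (jc_inv_bounds q (Nat.prime_of_mem_primesLE hq)).1
    positivity

set_option maxHeartbeats 1600000 in
lemma jc_main_aux (k p Y : ℕ) (hk : 1 ≤ k) (hp : p.Prime) (x L l ε : ℝ) (hL : L = Real.log x)
    (hLl : Real.exp l = L) (hl : 0 ≤ l) (hx : 0 < x) (hε : ε = 1 / (10 * ((p : ℝ) - 1)))
    (HLx : ∀ D : Finset ℕ, D.card = k →
        (∀ d ∈ D, 2 ≤ d ∧ (d : ℝ) ≤ L ^ (k + 1)) →
        singSeries (insert 0 D) ≠ 0 →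
        |(primePi x (insert 0 D) : ℝ) - singSeries (insert 0 D) * x / L ^ (k + 1)| ≤
          ε * singSeries (insert 0 D) * x / L ^ (k + 1))
    (hsv : ∀ E : Finset ℕ, E.card = k + 2 → (∀ h ∈ E, (h : ℝ) ≤ L) →
      (primePi x E : ℝ) ≤ x * Real.exp (-(((k + 2 : ℕ) : ℝ) - 1 / 4) * l))
    (hY : Y = ⌊l / 8⌋₊)
    (b1 : p ≤ Y) (b1' : 2 * (k + 1) ≤ Y)
    (b2 : 2 * ((k : ℝ) + 1) ^ 2 / Y ≤ ε)
    (b3 : Real.exp (16 * k * ((k : ℝ) + 1) ^ 3 / Real.log Y) ≤ 1 + ε)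
    (b4 : 4 * ((k : ℝ) + 2) ≤ Real.log Y)
    (b5 : k * Real.exp (l / 4) ≤ Real.exp l)
    (b6 : k ≤ ε / 2 * Real.exp (l / 2))
    (b7 : L ^ (k + 2) ≤ ε / 2 * x)
    (D : Finset ℕ) (hD : IsChampion k x D) : ∀ d ∈ D, p ∣ d := by
  intro d0 hd0
  by_contra hpd
  obtain ⟨hDc, hpos, hmax⟩ := hD
  have hp2 : (2 : ℝ) ≤ p := by exact_mod_cast hp.two_le
  have hε0 : 0 < ε := by rw [hε]; apply one_div_pos.2; linarith
  have hρ : 1 - 1 / ((p : ℝ) - 1) = 1 - 10 * ε := by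
    have : (p : ℝ) - 1 ≠ 0 := by linarith
    rw [hε]; field_simp
  have hε1 : ε ≤ 1 / 10 := by
    rw [hε]; apply one_div_le_one_div_of_le (by norm_num); linarith
  have hY2 : 2 ≤ Y := hp.two_le.trans b1
  have hY0 : (1 : ℝ) ≤ Y := by exact_mod_cast (by omega : 1 ≤ Y)
  have hk1 : (1 : ℝ) ≤ k := by exact_mod_cast hk
  have hlY : l ≤ 16 * Y := by
    have := Nat.lt_floor_add_one (l / 8)
    rw [← hY] at this
    linarith
  have hL1 : 1 ≤ L := by rw [← hLl]; exact Real.one_le_exp hl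
  have hL0 : 0 < L := by linarith
  set T := x / L ^ (k + 1) with hT
  have hT0 : 0 < T := by positivity
  have hT1 : 1 ≤ T := by
    rw [hT, le_div_iff₀ (by positivity), one_mul]
    have h1 : L ^ (k + 1) ≤ L ^ (k + 2) := pow_le_pow_right₀ hL1 (by omega)
    have h2 : ε / 2 * x ≤ 1 * x := mul_le_mul_of_nonneg_right (by linarith) hx.le
    linarith
  have hPl : (primorial Y : ℝ) ≤ Real.exp (l / 4) := by
    have h1 : (primorial Y : ℝ) ≤ 4 ^ Y := by exact_mod_cast primorial_le_four_pow Y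
    have h2 : (4 : ℝ) ≤ Real.exp 2 := by
      have := Real.exp_one_gt_d9
      have e : Real.exp 2 = Real.exp 1 * Real.exp 1 := by rw [← Real.exp_add]; norm_num
      rw [e]; nlinarith
    have h3 : (Y : ℝ) ≤ l / 8 := by rw [hY]; exact Nat.floor_le (by positivity)
    calc (primorial Y : ℝ) ≤ 4 ^ Y := h1
      _ ≤ (Real.exp 2) ^ Y := pow_le_pow_left₀ (by norm_num) h2 _
      _ = Real.exp (Y * 2) := by rw [← Real.exp_nat_mul]
      _ ≤ _ := Real.exp_le_exp.2 (by linarith)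
  set MM := ∏ q ∈ Nat.primesLE Y, ((1 - 1 / (q : ℝ)) ^ k)⁻¹ with hMM
  have hMMl : 4 * ((k : ℝ) + 2) ≤ MM := jc_MM_lower k Y hk _ (by linarith) b4
  have hMM0 : 0 < MM := by linarith
  -- lower bound
  set P := primorial Y with hPdef
  have hP : 0 < P := primorial_pos Y
  have hP2 : 2 ≤ P := Nat.le_of_dvd hP (jc_prime_dvd_primorial Nat.prime_two hY2)
  have hSl : MM * (1 - ε) ≤ singSeries (insert 0 (jcTup k P)) := by
    refine le_trans ?_ (jcTup_sing k Y b1')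
    exact mul_le_mul_of_nonneg_left (by linarith) hMM0.le
  have hS'0 : 0 < singSeries (insert 0 (jcTup k P)) :=
    lt_of_lt_of_le (mul_pos hMM0 (by linarith)) hSl
  have hLpow : L ≤ L ^ (k + 1) := le_self_pow₀ hL1 (by omega)
  have hHL' := HLx (jcTup k P) (jcTup_card k P hP) (by
    intro d hd
    obtain ⟨j, hj1, hjk, rfl⟩ := (jcTup_mem k P d).1 hd
    refine ⟨by nlinarith, ?_⟩
    have h1 : (j : ℝ) * P ≤ k * P :=
      mul_le_mul_of_nonneg_right (by exact_mod_cast hjk) (by positivity)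
    have h2 : (k : ℝ) * P ≤ k * Real.exp (l / 4) := mul_le_mul_of_nonneg_left hPl (by linarith)
    push_cast
    linarith) hS'0.ne'
  rw [mul_div_assoc, mul_div_assoc, ← hT] at hHL'
  have hlow := jc_N_tup_lower k Y hk x L l ε hL hLl hL1 hx hε0 hsv hPl b5 b6 b7
  rw [← hT, ← hPdef] at hlow
  have hN' : (Ncham x (jcTup k P) : ℝ) ≤ Ncham x D := by
    exact_mod_cast hmax (jcTup k P) (jcTup_card k P hP) (fun d hd =>
      Nat.pos_of_ne_zero (fun h0 => jcTup_zero_notMem k P hP (h0 ▸ hd)))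
  have hlow2 : ((1 - ε) * (MM * (1 - ε)) - ε) * T ≤ Ncham x D := by
    have h1 := (abs_le.1 hHL').1
    have h2 : (1 - ε) * ((MM * (1 - ε)) * T) ≤
        (1 - ε) * (singSeries (insert 0 (jcTup k P)) * T) :=
      mul_le_mul_of_nonneg_left (mul_le_mul_of_nonneg_right hSl hT0.le) (by linarith)
    have e : ((1 - ε) * (MM * (1 - ε)) - ε) * T = (1 - ε) * ((MM * (1 - ε)) * T) - ε * T := by ring
    rw [e]
    linarith
  -- a small count contradicts the lower bound
  have hsmall : (Ncham x D : ℝ) ≤ (k + 1) * T → False := by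
    intro h
    have h1 : (1 - ε) * (MM * (1 - ε)) - ε ≤ k + 1 := le_of_mul_le_mul_right (hlow2.trans h) hT0
    have h2 : (0.81 : ℝ) ≤ (1 - ε) * (1 - ε) := by nlinarith
    have h3 : MM * 0.81 ≤ MM * ((1 - ε) * (1 - ε)) := mul_le_mul_of_nonneg_left h2 hMM0.le
    have e : (1 - ε) * (MM * (1 - ε)) = MM * ((1 - ε) * (1 - ε)) := by ring
    rw [e] at h1
    linarith
  have h0D : 0 ∉ D := fun h => absurd (hpos 0 h) (by omega)
  have hc0 : (insert 0 D).card = k + 1 := by rw [Finset.card_insert_of_notMem h0D, hDc]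
  have hNpi := jc_N_le_primePi x D
  have hinadm : ∀ q : ℕ, q.Prime → nu (insert 0 D) q = q → False := by
    intro q hq hnq
    apply hsmall
    have h1 := jc_pi_inadm x (insert 0 D) q hq hnq
    have h2 := jc_nu_le_card (insert 0 D) q
    rw [hc0, hnq] at h2
    have h3 : (Ncham x D : ℝ) ≤ k + 1 := by exact_mod_cast hNpi.trans (h1.trans h2)
    have h4 : ((k : ℝ) + 1) * 1 ≤ (k + 1) * T := mul_le_mul_of_nonneg_left hT1 (by positivity)
    linarith
  by_cases hbig : ∃ d ∈ D, L ^ (k + 1) < (d : ℝ)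
  · obtain ⟨d, hd, hdL⟩ := hbig
    apply hsmall
    have h1 := jc_N_large x hx.le D d hd
    rw [hDc] at h1
    have h2 : (Ncham x D : ℝ) * L ^ (k + 1) ≤ Ncham x D * d :=
      mul_le_mul_of_nonneg_left hdL.le (by positivity)
    have h3 : (Ncham x D : ℝ) ≤ k * x / L ^ (k + 1) := by
      rw [le_div_iff₀ (by positivity)]; linarith
    rw [mul_div_assoc, ← hT] at h3
    linarith
  · push Not at hbig
    by_cases hone : 1 ∈ D
    · apply hinadm 2 Nat.prime_two
      apply le_antisymm (jc_nu_le _ _ (by norm_num))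
      unfold nu
      rw [← Nat.lt_iff_add_one_le, Finset.one_lt_card]
      refine ⟨0, ?_, 1, ?_, by norm_num⟩
      · exact Finset.mem_image.2 ⟨0, Finset.mem_insert_self _ _, by simp⟩
      · exact Finset.mem_image.2 ⟨1, Finset.mem_insert_of_mem hone, by simp⟩
    · by_cases hS0 : singSeries (insert 0 D) = 0
      · obtain ⟨q, hq, hnq⟩ := jc_sing_zero _ hS0
        exact hinadm q hq hnq
      · have hHL := HLx D hDc (by
          intro d hd
          refine ⟨?_, hbig d hd⟩
          have := hpos d hd
          have : d ≠ 1 := fun h => hone (h ▸ hd)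
          omega) hS0
        rw [mul_div_assoc, mul_div_assoc, ← hT] at hHL
        have hSup := jc_S_upper k p Y hp L l ε hLl hl hY2 b1 hlY (by linarith)
          (by rw [hρ]; linarith) b3 D hDc hpos hbig d0 hd0 hpd
        rw [hρ, ← hMM] at hSup
        have h1 := (abs_le.1 hHL).2
        have h2 : (Ncham x D : ℝ) ≤ primePi x (insert 0 D) := by exact_mod_cast hNpi
        have h3 : (1 + ε) * (singSeries (insert 0 D) * T) ≤
            (1 + ε) * (((1 - 10 * ε) * MM * (1 + ε)) * T) :=
          mul_le_mul_of_nonneg_left (mul_le_mul_of_nonneg_right hSup hT0.le) (by linarith)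
        have h4 : ((1 - ε) * (MM * (1 - ε)) - ε) * T ≤
            ((1 + ε) * ((1 - 10 * ε) * MM * (1 + ε))) * T := by linarith
        have h5 := le_of_mul_le_mul_right h4 hT0
        have h6 : ε * 1 < ε * (MM * (6 + 20 * ε)) := by
          apply mul_lt_mul_of_pos_left _ hε0
          have h61 : MM * 6 ≤ MM * (6 + 20 * ε) :=
            mul_le_mul_of_nonneg_left (by linarith) hMM0.le
          linarith
        have h7 : 0 ≤ ε * MM * (10 * ε ^ 2) := by positivity
        have h8 : (1 - ε) * (MM * (1 - ε)) - (1 + ε) * ((1 - 10 * ε) * MM * (1 + ε)) =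
          ε * (MM * (6 + 20 * ε)) + ε * MM * (10 * ε ^ 2) := by ring
        linarith

lemma jc_eventually_l (k p : ℕ) (hp : p.Prime) (ε : ℝ) (hε : 0 < ε) :
    ∀ᶠ l : ℝ in Filter.atTop, 0 ≤ l ∧ p ≤ ⌊l / 8⌋₊ ∧ 2 * (k + 1) ≤ ⌊l / 8⌋₊ ∧
    2 * ((k : ℝ) + 1) ^ 2 / (⌊l / 8⌋₊ : ℝ) ≤ ε ∧
    Real.exp (16 * k * ((k : ℝ) + 1) ^ 3 / Real.log (⌊l / 8⌋₊ : ℝ)) ≤ 1 + ε ∧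
    4 * ((k : ℝ) + 2) ≤ Real.log (⌊l / 8⌋₊ : ℝ) ∧
    k * Real.exp (l / 4) ≤ Real.exp l ∧
    k ≤ ε / 2 * Real.exp (l / 2) := by
  have hfl : Filter.Tendsto (fun l : ℝ => ⌊l / 8⌋₊) Filter.atTop Filter.atTop :=
    tendsto_nat_floor_atTop.comp (Filter.tendsto_id.atTop_div_const (by norm_num))
  have hflR : Filter.Tendsto (fun l : ℝ => (⌊l / 8⌋₊ : ℝ)) Filter.atTop Filter.atTop :=
    tendsto_natCast_atTop_atTop.comp hfl
  have hlog : Filter.Tendsto (fun l : ℝ => Real.log (⌊l / 8⌋₊ : ℝ)) Filter.atTop Filter.atTop :=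
    Real.tendsto_log_atTop.comp hflR
  have h2 := (hflR.const_div_atTop (2 * ((k : ℝ) + 1) ^ 2)).eventually (eventually_le_nhds hε)
  have h3 : Filter.Tendsto
      (fun l : ℝ => Real.exp (16 * k * ((k : ℝ) + 1) ^ 3 / Real.log (⌊l / 8⌋₊ : ℝ)))
      Filter.atTop (nhds (Real.exp 0)) :=
    (Real.continuous_exp.tendsto 0).comp (hlog.const_div_atTop _)
  rw [Real.exp_zero] at h3
  have h3' := h3.eventually (eventually_le_nhds (by linarith : (1 : ℝ) < 1 + ε))
  have h6 : Filter.Tendsto (fun l : ℝ => Real.exp (l / 2)) Filter.atTop Filter.atTop :=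
    Real.tendsto_exp_atTop.comp (Filter.tendsto_id.atTop_div_const (by norm_num))
  filter_upwards [Filter.eventually_ge_atTop 0, hfl.eventually_ge_atTop p,
    hfl.eventually_ge_atTop (2 * (k + 1)), h2, h3', hlog.eventually_ge_atTop (4 * ((k : ℝ) + 2)),
    h6.eventually_ge_atTop (k : ℝ), h6.eventually_ge_atTop (k / (ε / 2))]
    with l a1 a2 a3 a4 a5 a6 a7 a8
  refine ⟨a1, a2, a3, a4, a5, a6, ?_, ?_⟩
  · have e : Real.exp l = Real.exp (l / 2) * Real.exp (l / 2) := by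
      rw [← Real.exp_add]; congr 1; ring
    rw [e]
    exact mul_le_mul a7 (Real.exp_le_exp.2 (by linarith)) (by positivity) (by positivity)
  · rw [div_le_iff₀ (by positivity)] at a8
    linarith

lemma jc_eventually_x (n : ℕ) (ε : ℝ) (hε : 0 < ε) :
    ∀ᶠ x : ℝ in Filter.atTop, (Real.log x) ^ n ≤ ε * x := by
  have h := (Real.isLittleO_pow_log_id_atTop (n := n)).def hε
  filter_upwards [h, Filter.eventually_ge_atTop 1] with x hx hx1
  have h1 : 0 ≤ Real.log x ^ n := pow_nonneg (Real.log_nonneg hx1) n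
  rw [Real.norm_of_nonneg h1] at hx
  simpa [abs_of_nonneg (by linarith : (0 : ℝ) ≤ x)] using hx

/-- Theorem 1: under the uniform Hardy–Littlewood conjecture, any fixed
prime divides every element of all sufficiently large `k`-tuple jumping champions. -/
theorem stmt14 (k : ℕ) (hk : 1 ≤ k)
    (HL : ∀ ε : ℝ, 0 < ε → ∃ X : ℝ, ∀ x : ℝ, X ≤ x →
      ∀ D : Finset ℕ, D.card = k →
        (∀ d ∈ D, 2 ≤ d ∧ (d : ℝ) ≤ (Real.log x) ^ (k + 1)) →
        singSeries (insert 0 D) ≠ 0 →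
        |(primePi x (insert 0 D) : ℝ) -
            singSeries (insert 0 D) * x / (Real.log x) ^ (k + 1)| ≤
          ε * singSeries (insert 0 D) * x / (Real.log x) ^ (k + 1)) :
    ∀ p : ℕ, p.Prime → ∃ X : ℝ, ∀ x : ℝ, X ≤ x →
      ∀ D : Finset ℕ, IsChampion k x D → ∀ d ∈ D, p ∣ d := by
  intro p hp
  have hp2 : (2 : ℝ) ≤ p := by exact_mod_cast hp.two_le
  set ε : ℝ := 1 / (10 * ((p : ℝ) - 1)) with hε
  have hε0 : 0 < ε := one_div_pos.2 (by linarith)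
  obtain ⟨X0, hX0⟩ := HL ε hε0
  have hll : Filter.Tendsto (fun x : ℝ => Real.log (Real.log x)) Filter.atTop Filter.atTop :=
    Real.tendsto_log_atTop.comp Real.tendsto_log_atTop
  have hev := hll.eventually (jc_eventually_l k p hp ε hε0)
  have hall : ∀ᶠ x : ℝ in Filter.atTop,
      ∀ D : Finset ℕ, IsChampion k x D → ∀ d ∈ D, p ∣ d := by
    filter_upwards [hev, jc_eventually_x (k + 2) (ε / 2) (by linarith),
      jc_sieve (k + 2) (by omega), Filter.eventually_ge_atTop X0,
      Filter.eventually_gt_atTop 1] with x hx hx7 hsv hxX hx1 D hD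
    obtain ⟨a0, a1, a2, a3, a4, a5, a6, a7⟩ := hx
    exact jc_main_aux k p ⌊Real.log (Real.log x) / 8⌋₊ hk hp x (Real.log x)
      (Real.log (Real.log x)) ε rfl (Real.exp_log (Real.log_pos hx1)) a0 (by linarith) hε
      (hX0 x hxX) hsv rfl a1 a2 a3 a4 a5 a6 a7 hx7 D hD
  exact Filter.eventually_atTop.1 hall
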